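/- Suppose X'X/n → Q with Q symmetric positive definite and let β⁽ⁿ⁾ be a sequence of parameters such that either √n β₂⁽ⁿ⁾ → γ ∈ ℝ^{k₂} or ‖√n β₂⁽ⁿ⁾‖ → ∞. Then the finite-sample density f_{n,β⁽ⁿ⁾,σ} of √n(β̃ − β⁽ⁿ⁾) converges in L¹(ℝ^k) to f_∞, where f_∞ = f_{∞,γ} in the first case and f_∞ is the density of the N(0, σ²Q⁻¹) distribution in the second case; consequently the distribution of √n(β̃ − β⁽ⁿ⁾) under P_{n,β⁽ⁿ⁾,σ} converges to the corresponding limiting distribution in total variation distance. -/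

import Mathlib

open MeasureTheory Matrix Real Filter Topology ENNReal NNReal

noncomputable section

/-- Euclidean norm of a finite tuple. -/
def enorm2 {ι : Type*} [Fintype ι] (v : ι → ℝ) : ℝ := Real.sqrt (∑ i, v i ^ 2)

/-- The `N(0, σ² I)` distribution on `ι → ℝ`, given by its Lebesgue density. -/
def gaussPi (ι : Type*) [Fintype ι] (σ2 : ℝ) : Measure (ι → ℝ) :=
  volume.withDensity fun x => ENNReal.ofReal
    ((2 * π * σ2) ^ (-(Fintype.card ι : ℝ) / 2) * Real.exp (-(enorm2 x) ^ 2 / (2 * σ2)))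

/-- The Lebesgue density of the `N(0, σ² Q⁻¹)` distribution on `ι → ℝ`
(for `Q` symmetric positive definite). -/
def gaussCovDens {ι : Type*} [Fintype ι] [DecidableEq ι] (σ2 : ℝ) (Q : Matrix ι ι ℝ)
    (x : ι → ℝ) : ℝ :=
  (2 * π * σ2) ^ (-(Fintype.card ι : ℝ) / 2) * Real.sqrt Q.det *
    Real.exp (-(x ⬝ᵥ Q.mulVec x) / (2 * σ2))

/-- The `N(0, σ² Q⁻¹)` distribution on `ι → ℝ` (for `Q` symmetric positive definite),
given by its Lebesgue density. -/
def gaussCov {ι : Type*} [Fintype ι] [DecidableEq ι] (σ2 : ℝ) (Q : Matrix ι ι ℝ) :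
    Measure (ι → ℝ) :=
  volume.withDensity fun x => ENNReal.ofReal (gaussCovDens σ2 Q x)

open Classical in
/-- Symmetric positive semidefinite square root (junk value `0` off the psd cone). -/
def msqrt {ι : Type*} [Fintype ι] [DecidableEq ι] (A : Matrix ι ι ℝ) : Matrix ι ι ℝ :=
  if h : A.PosSemidef then
    (h.isHermitian.eigenvectorUnitary : Matrix ι ι ℝ) *
      Matrix.diagonal (Real.sqrt ∘ h.isHermitian.eigenvalues) *
      (star h.isHermitian.eigenvectorUnitary : Matrix ι ι ℝ)
  else 0

open Classical in
/-- Smallest eigenvalue of a symmetric matrix (junk value `0` otherwise). -/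
def lamMin {ι : Type*} [Fintype ι] [DecidableEq ι] (A : Matrix ι ι ℝ) : ℝ :=
  if h : A.IsHermitian then ⨅ i, h.eigenvalues i else 0

open Classical in
/-- Largest eigenvalue of a symmetric matrix (junk value `0` otherwise). -/
def lamMax {ι : Type*} [Fintype ι] [DecidableEq ι] (A : Matrix ι ι ℝ) : ℝ :=
  if h : A.IsHermitian then ⨆ i, h.eigenvalues i else 0

variable {n k₁ k₂ : ℕ}

/-- First block of columns of the design matrix. -/
def X1 (X : Matrix (Fin n) (Fin k₁ ⊕ Fin k₂) ℝ) : Matrix (Fin n) (Fin k₁) ℝ :=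
  X.submatrix id Sum.inl

/-- Second block of columns of the design matrix. -/
def X2 (X : Matrix (Fin n) (Fin k₁ ⊕ Fin k₂) ℝ) : Matrix (Fin n) (Fin k₂) ℝ :=
  X.submatrix id Sum.inr

/-- Unrestricted least squares estimator. -/
def betaU (X : Matrix (Fin n) (Fin k₁ ⊕ Fin k₂) ℝ) (Y : Fin n → ℝ) : (Fin k₁ ⊕ Fin k₂) → ℝ :=
  (Xᵀ * X)⁻¹.mulVec (Xᵀ.mulVec Y)

/-- Restricted least squares estimator. -/
def betaR (X : Matrix (Fin n) (Fin k₁ ⊕ Fin k₂) ℝ) (Y : Fin n → ℝ) : (Fin k₁ ⊕ Fin k₂) → ℝ :=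
  Sum.elim (((X1 X)ᵀ * X1 X)⁻¹.mulVec ((X1 X)ᵀ.mulVec Y)) (fun _ => 0)

/-- Risk estimate of the restricted model. -/
def rR (X : Matrix (Fin n) (Fin k₁ ⊕ Fin k₂) ℝ) (σ2 : ℝ) (Y : Fin n → ℝ) : ℝ :=
  Y ⬝ᵥ Y - betaR X Y ⬝ᵥ (Xᵀ * X).mulVec (betaR X Y) + σ2 * (2 * k₁ - n)

/-- Risk estimate of the unrestricted model. -/
def rU (X : Matrix (Fin n) (Fin k₁ ⊕ Fin k₂) ℝ) (σ2 : ℝ) (Y : Fin n → ℝ) : ℝ :=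
  Y ⬝ᵥ Y - betaU X Y ⬝ᵥ (Xᵀ * X).mulVec (betaU X Y) + σ2 * (2 * (k₁ + k₂) - n)

/-- The model averaging weight `λ̂`. -/
def lamHat (α σ2 : ℝ) (X : Matrix (Fin n) (Fin k₁ ⊕ Fin k₂) ℝ) (Y : Fin n → ℝ) : ℝ :=
  Real.exp (-(α * rR X σ2 Y) / σ2) /
    (Real.exp (-(α * rR X σ2 Y) / σ2) + Real.exp (-(α * rU X σ2 Y) / σ2))

/-- Leung and Barron's model averaging estimator `β̃`. -/
def mavg (α σ2 : ℝ) (X : Matrix (Fin n) (Fin k₁ ⊕ Fin k₂) ℝ) (Y : Fin n → ℝ) :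
    (Fin k₁ ⊕ Fin k₂) → ℝ :=
  lamHat α σ2 X Y • betaR X Y + (1 - lamHat α σ2 X Y) • betaU X Y

/-- Projection on the column space of `X₁`. -/
def projR (X : Matrix (Fin n) (Fin k₁ ⊕ Fin k₂) ℝ) : Matrix (Fin n) (Fin n) ℝ :=
  X1 X * ((X1 X)ᵀ * X1 X)⁻¹ * (X1 X)ᵀ

/-- Projection on the column space of `X`. -/
def projU (X : Matrix (Fin n) (Fin k₁ ⊕ Fin k₂) ℝ) : Matrix (Fin n) (Fin n) ℝ :=
  X * (Xᵀ * X)⁻¹ * Xᵀ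

/-- The distribution `P_{n,β,σ}` of `Y = Xβ + u`, `u ~ N(0, σ² Iₙ)`. -/
def Pmeas (X : Matrix (Fin n) (Fin k₁ ⊕ Fin k₂) ℝ) (β : (Fin k₁ ⊕ Fin k₂) → ℝ) (σ2 : ℝ) :
    Measure (Fin n → ℝ) :=
  (gaussPi (Fin n) σ2).map (fun u => X.mulVec β + u)

/-- The function `h_{a,b}(ξ) = ξ / (1 + a exp(−ξ²/b))`. -/
def hfun (a b ξ : ℝ) : ℝ := ξ / (1 + a * Real.exp (-ξ ^ 2 / b))

/-- The inverse `g_{a,b}` of `h_{a,b}`. -/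
def gfun (a b : ℝ) : ℝ → ℝ := Function.invFun (hfun a b)

open Classical in
/-- `g(‖w‖) w / ‖w‖`, with the convention that this is `0` for `w = 0`. -/
def gdir (a b : ℝ) {ι : Type*} [Fintype ι] (w : ι → ℝ) : ι → ℝ :=
  if w = 0 then 0 else (gfun a b (enorm2 w) / enorm2 w) • w

/-- The finite-sample density `f_{n,β,σ}` of `√n(β̃ − β)` (Theorem 3 of the paper). -/
def fdens {n k₁ k₂ : ℕ} (X : Matrix (Fin n) (Fin k₁ ⊕ Fin k₂) ℝ)
    (β : (Fin k₁ ⊕ Fin k₂) → ℝ) (σ2 α : ℝ) (t : (Fin k₁ ⊕ Fin k₂) → ℝ) : ℝ :=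
  let a := Real.exp (2 * α * k₂)
  let b := σ2 / α
  let S := (X2 X)ᵀ * (1 - projR X) * X2 X
  let w := (Real.sqrt n)⁻¹ • (msqrt S).mulVec ((t ∘ Sum.inr) + Real.sqrt n • (β ∘ Sum.inr))
  (2 * π * σ2) ^ (-((k₁ : ℝ) + k₂) / 2) * Real.sqrt (((n : ℝ)⁻¹ • (Xᵀ * X)).det) *
    Real.exp (-(enorm2 ((Real.sqrt n)⁻¹ •
        ((msqrt ((X1 X)ᵀ * X1 X)).mulVec (t ∘ Sum.inl) +
          ((msqrt ((X1 X)ᵀ * X1 X))⁻¹ * (X1 X)ᵀ * X2 X).mulVec (t ∘ Sum.inr)))) ^ 2 /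
      (2 * σ2)) *
    (1 + Real.exp (-(α / σ2) * gfun a b (enorm2 w) ^ 2 + 2 * α * k₂)) ^ (k₂ : ℕ) *
    (1 + (2 * α / σ2) * gfun a b (enorm2 w) ^ 2 *
        (1 + Real.exp ((α / σ2) * gfun a b (enorm2 w) ^ 2 - 2 * α * k₂))⁻¹)⁻¹ *
    Real.exp (-(enorm2 (gdir a b w - (msqrt S).mulVec (β ∘ Sum.inr))) ^ 2 / (2 * σ2))

/-- The density `f_{∞,γ}` of the limiting distribution (formula (13) of the paper),
stated for a general symmetric positive definite matrix in place of `Q`. -/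
def fInfty {k₁ k₂ : ℕ} (Q : Matrix (Fin k₁ ⊕ Fin k₂) (Fin k₁ ⊕ Fin k₂) ℝ) (σ2 α : ℝ)
    (γ : Fin k₂ → ℝ) (t : (Fin k₁ ⊕ Fin k₂) → ℝ) : ℝ :=
  let a := Real.exp (2 * α * k₂)
  let b := σ2 / α
  let S := Q.toBlocks₂₂ - Q.toBlocks₂₁ * Q.toBlocks₁₁⁻¹ * Q.toBlocks₁₂
  let w := (msqrt S).mulVec ((t ∘ Sum.inr) + γ)
  (2 * π * σ2) ^ (-((k₁ : ℝ) + k₂) / 2) * Real.sqrt Q.det *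
    Real.exp (-(enorm2 ((msqrt Q.toBlocks₁₁).mulVec (t ∘ Sum.inl) +
        ((msqrt Q.toBlocks₁₁)⁻¹ * Q.toBlocks₁₂).mulVec (t ∘ Sum.inr))) ^ 2 / (2 * σ2)) *
    (1 + Real.exp (-(α / σ2) * gfun a b (enorm2 w) ^ 2 + 2 * α * k₂)) ^ (k₂ : ℕ) *
    (1 + (2 * α / σ2) * gfun a b (enorm2 w) ^ 2 *
        (1 + Real.exp ((α / σ2) * gfun a b (enorm2 w) ^ 2 - 2 * α * k₂))⁻¹)⁻¹ *
    Real.exp (-(enorm2 (gdir a b w - (msqrt S).mulVec γ)) ^ 2 / (2 * σ2))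

/-- The limiting law (12): the distribution of
`B_∞γ + C_∞Z₁ + [1 + exp(2αk₂) exp(−α‖Z₂ + (Q₂₂ − Q₂₁Q₁₁⁻¹Q₁₂)^{1/2}γ‖²/σ²)]⁻¹
  · (D_∞Z₂ − B_∞γ)` with `Z₁ ~ N(0, σ²I_{k₁})`, `Z₂ ~ N(0, σ²I_{k₂})` independent. -/
def limitLaw {k₁ k₂ : ℕ} (Q : Matrix (Fin k₁ ⊕ Fin k₂) (Fin k₁ ⊕ Fin k₂) ℝ) (σ2 α : ℝ)
    (γ : Fin k₂ → ℝ) : Measure ((Fin k₁ ⊕ Fin k₂) → ℝ) :=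
  ((gaussPi (Fin k₁) σ2).prod (gaussPi (Fin k₂) σ2)).map
    (fun Z : (Fin k₁ → ℝ) × (Fin k₂ → ℝ) =>
      (fromRows (Q.toBlocks₁₁⁻¹ * Q.toBlocks₁₂) (-1)).mulVec γ +
      (fromRows (msqrt Q.toBlocks₁₁)⁻¹ 0).mulVec Z.1 +
      (1 + Real.exp (2 * α * k₂) *
          Real.exp (-α * (enorm2 (Z.2 +
            (msqrt (Q.toBlocks₂₂ - Q.toBlocks₂₁ * Q.toBlocks₁₁⁻¹ * Q.toBlocks₁₂)).mulVec
              γ)) ^ 2 / σ2))⁻¹ •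
        ((fromRows
            (-(Q.toBlocks₁₁⁻¹ * Q.toBlocks₁₂ *
              (msqrt (Q.toBlocks₂₂ - Q.toBlocks₂₁ * Q.toBlocks₁₁⁻¹ * Q.toBlocks₁₂))⁻¹))
            ((msqrt (Q.toBlocks₂₂ - Q.toBlocks₂₁ * Q.toBlocks₁₁⁻¹ * Q.toBlocks₁₂))⁻¹)).mulVec
            Z.2 -
          (fromRows (Q.toBlocks₁₁⁻¹ * Q.toBlocks₁₂) (-1)).mulVec γ))

/-! Standardizing the design, by a block triangular square root of its Gram matrix, makes the
regressors orthonormal. In these coordinates `β̃` becomes `(Z₁, shrink (Z₂ + m))` with independent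
Gaussian `Z₁`, `Z₂`. The map `shrink` is radial, with profile `h`, and its inverse is radial with
profile `g`, so the change of variables formula gives the density. Transported back, this density
depends on the square root only through quadratic forms in `XᵀX/n` and is therefore continuous in
`(XᵀX/n, √n β₂)`, which yields pointwise convergence when `√n β₂` converges. When `‖√n β₂‖ → ∞`,
the Jacobian weight and the ratio `g(r)/r` tend to one so fast that even `g(r) - r → 0`, and the
pointwise limit is the Gaussian density. Scheffé's lemma upgrades pointwise convergence of densities
to convergence in `L¹`, hence in total variation. -/

section EuclideanNorm

variable {ι κ : Type*} [Fintype ι] [Fintype κ]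

lemma enorm2_nonneg (v : ι → ℝ) : 0 ≤ enorm2 v := Real.sqrt_nonneg _

lemma enorm2_sq (v : ι → ℝ) : enorm2 v ^ 2 = ∑ i, v i ^ 2 :=
  Real.sq_sqrt (Finset.sum_nonneg fun i _ => sq_nonneg (v i))

lemma enorm2_sq_eq_dotProduct (v : ι → ℝ) : enorm2 v ^ 2 = v ⬝ᵥ v := by
  simp only [enorm2_sq, dotProduct, ← sq]

lemma enorm2_eq_zero {v : ι → ℝ} : enorm2 v = 0 ↔ v = 0 := by
  rw [← sq_eq_zero_iff, enorm2_sq_eq_dotProduct, dotProduct_self_eq_zero]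

lemma enorm2_smul (c : ℝ) (v : ι → ℝ) : enorm2 (c • v) = |c| * enorm2 v := by
  simp only [enorm2, Pi.smul_apply, smul_eq_mul, mul_pow, ← Finset.mul_sum]
  rw [Real.sqrt_mul (sq_nonneg c), Real.sqrt_sq_eq_abs]

lemma continuous_enorm2 : Continuous (enorm2 : (ι → ℝ) → ℝ) := by
  unfold enorm2
  fun_prop

lemma abs_apply_le_enorm2 (v : ι → ℝ) (i : ι) : |v i| ≤ enorm2 v := by
  rw [← Real.sqrt_sq_eq_abs]
  exact Real.sqrt_le_sqrt
    (Finset.single_le_sum (f := fun j => v j ^ 2) (fun j _ => sq_nonneg _) (Finset.mem_univ i))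

lemma enorm2_sq_le_add (v w : ι → ℝ) :
    enorm2 w ^ 2 ≤ 2 * enorm2 (v + w) ^ 2 + 2 * enorm2 v ^ 2 := by
  simp only [enorm2_sq, Finset.mul_sum, ← Finset.sum_add_distrib, Pi.add_apply]
  exact Finset.sum_le_sum fun i _ => by nlinarith [sq_nonneg (2 * v i + w i)]

lemma enorm2_mulVec_sq (T : Matrix κ ι ℝ) (v : ι → ℝ) :
    enorm2 (T *ᵥ v) ^ 2 = v ⬝ᵥ (Tᵀ * T) *ᵥ v := by
  rw [enorm2_sq_eq_dotProduct, dotProduct_mulVec, ← mulVec_transpose, mulVec_mulVec,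
    dotProduct_comm]

end EuclideanNorm

section Densities

variable {E : Type*} [MeasurableSpace E] {μ : Measure E}

/-- `f` is a density of the probability measure `ν` with respect to `μ`; the density is required to
be measurable and nonnegative everywhere, not just almost everywhere. -/
structure IsDensityOf (f : E → ℝ) (ν μ : Measure E) : Prop where
  measurable : Measurable f
  nonneg : ∀ x, 0 ≤ f x
  withDensity_eq : μ.withDensity (fun x => ENNReal.ofReal (f x)) = ν
  isProbabilityMeasure : IsProbabilityMeasure ν

namespace IsDensityOf

variable {f f₀ : E → ℝ} {ν ν₀ : Measure E}

lemma lintegral_eq_one (hf : IsDensityOf f ν μ) : ∫⁻ x, ENNReal.ofReal (f x) ∂μ = 1 := by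
  have := hf.isProbabilityMeasure
  rw [← setLIntegral_univ, ← withDensity_apply _ MeasurableSet.univ, hf.withDensity_eq,
    measure_univ]

lemma integrable (hf : IsDensityOf f ν μ) : Integrable f μ := by
  refine ⟨hf.measurable.aestronglyMeasurable, ?_⟩
  rw [hasFiniteIntegral_iff_ofReal (ae_of_all _ hf.nonneg), hf.lintegral_eq_one]
  exact ENNReal.one_lt_top

lemma integral_eq_one (hf : IsDensityOf f ν μ) : ∫ x, f x ∂μ = 1 := by
  rw [integral_eq_lintegral_of_nonneg_ae (ae_of_all _ hf.nonneg)
    hf.measurable.aestronglyMeasurable, hf.lintegral_eq_one, ENNReal.toReal_one]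

lemma toReal_apply (hf : IsDensityOf f ν μ) {s : Set E} (hs : MeasurableSet s) :
    (ν s).toReal = ∫ x in s, f x ∂μ := by
  rw [← hf.withDensity_eq, withDensity_apply _ hs,
    integral_eq_lintegral_of_nonneg_ae (ae_of_all _ hf.nonneg)
      hf.measurable.aestronglyMeasurable]

lemma abs_toReal_sub_le_integral (hf : IsDensityOf f ν μ) (hf₀ : IsDensityOf f₀ ν₀ μ)
    {s : Set E} (hs : MeasurableSet s) :
    |(ν s).toReal - (ν₀ s).toReal| ≤ ∫ x, |f x - f₀ x| ∂μ := by
  have hdiff : Integrable (fun x => f x - f₀ x) μ := hf.integrable.sub hf₀.integrable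
  rw [hf.toReal_apply hs, hf₀.toReal_apply hs,
    ← integral_sub hf.integrable.integrableOn hf₀.integrable.integrableOn]
  calc |∫ x in s, (f x - f₀ x) ∂μ| ≤ ∫ x in s, |f x - f₀ x| ∂μ := abs_integral_le_integral_abs
    _ ≤ ∫ x, |f x - f₀ x| ∂μ :=
        setIntegral_le_integral hdiff.abs (ae_of_all _ fun x => abs_nonneg _)

lemma integral_abs_sub_eq (hf : IsDensityOf f ν μ) (hf₀ : IsDensityOf f₀ ν₀ μ) :
    ∫ x, |f x - f₀ x| ∂μ = 2 * ∫ x, max (f₀ x - f x) 0 ∂μ := by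
  have hsub : Integrable (fun x => f₀ x - f x) μ := hf₀.integrable.sub hf.integrable
  have habs : ∀ x, |f x - f₀ x| = 2 * max (f₀ x - f x) 0 - (f₀ x - f x) := fun x => by
    rcases le_total (f x) (f₀ x) with h | h
    · rw [abs_of_nonpos (by linarith), max_eq_left (by linarith)]; ring
    · rw [abs_of_nonneg (by linarith), max_eq_right (by linarith)]; ring
  simp_rw [habs]
  rw [integral_sub (hsub.pos_part.const_mul 2) hsub, integral_const_mul,
    integral_sub hf₀.integrable hf.integrable, hf.integral_eq_one, hf₀.integral_eq_one, sub_self,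
    sub_zero]

variable {I : Type*} {l : Filter I} {F : I → E → ℝ} {N : I → Measure E}

/-- Scheffé's lemma: since both densities have integral one, the `L¹` distance is twice the integral
of `(f₀ - F i)⁺`, which is dominated by `f₀`. -/
theorem tendsto_integral_abs_sub [l.IsCountablyGenerated]
    (hF : ∀ᶠ i in l, IsDensityOf (F i) (N i) μ) (hf₀ : IsDensityOf f₀ ν₀ μ)
    (hlim : ∀ᵐ x ∂μ, Tendsto (fun i => F i x) l (𝓝 (f₀ x))) :
    Tendsto (fun i => ∫ x, |F i x - f₀ x| ∂μ) l (𝓝 0) := by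
  have hpos : Tendsto (fun i => ∫ x, max (f₀ x - F i x) 0 ∂μ) l (𝓝 (∫ _, (0 : ℝ) ∂μ)) := by
    refine tendsto_integral_filter_of_dominated_convergence f₀ ?_ ?_ hf₀.integrable ?_
    · filter_upwards [hF] with i hi
      exact ((hf₀.measurable.sub hi.measurable).max measurable_const).aestronglyMeasurable
    · filter_upwards [hF] with i hi
      refine ae_of_all _ fun x => ?_
      rw [Real.norm_of_nonneg (le_max_right _ _)]
      exact max_le (sub_le_self _ (hi.nonneg x)) (hf₀.nonneg x)
    · filter_upwards [hlim] with x hx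
      simpa using (hx.const_sub (f₀ x)).max (tendsto_const_nhds (x := (0 : ℝ)))
  rw [integral_zero] at hpos
  refine Tendsto.congr' ?_ (by simpa using hpos.const_mul 2)
  filter_upwards [hF] with i hi using (hi.integral_abs_sub_eq hf₀).symm

theorem tendsto_iSup_abs_toReal_sub (hF : ∀ᶠ i in l, IsDensityOf (F i) (N i) μ)
    (hf₀ : IsDensityOf f₀ ν₀ μ) (hlim : Tendsto (fun i => ∫ x, |F i x - f₀ x| ∂μ) l (𝓝 0)) :
    Tendsto (fun i => ⨆ s : Set E, ⨆ _ : MeasurableSet s, |(N i s).toReal - (ν₀ s).toReal|)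
      l (𝓝 0) := by
  refine tendsto_of_tendsto_of_tendsto_of_le_of_le' tendsto_const_nhds hlim
    (Eventually.of_forall fun i => ?_) ?_
  · exact Real.iSup_nonneg fun s => Real.iSup_nonneg fun _ => abs_nonneg _
  · filter_upwards [hF] with i hi
    have hnn : 0 ≤ ∫ x, |F i x - f₀ x| ∂μ := integral_nonneg fun x => abs_nonneg _
    exact Real.iSup_le (fun s => Real.iSup_le
      (fun hs => hi.abs_toReal_sub_le_integral hf₀ hs) hnn) hnn

end IsDensityOf

lemma map_withDensity_comp {F : Type*} [MeasurableSpace F] {g : E → F} (hg : Measurable g)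
    {p : F → ℝ≥0∞} (hp : Measurable p) :
    (μ.withDensity fun x => p (g x)).map g = (μ.map g).withDensity p := by
  ext s hs
  rw [Measure.map_apply hg hs, withDensity_apply _ (hg hs), withDensity_apply _ hs,
    setLIntegral_map hs hp hg]

lemma map_withDensity_abs_det_fderiv_mul [NormedAddCommGroup E] [NormedSpace ℝ E]
    [FiniteDimensional ℝ E] [BorelSpace E] [μ.IsAddHaarMeasure] {f : E → E} {f' : E → E →L[ℝ] E}
    (hf' : ∀ x, HasFDerivAt f (f' x) x) (hf : Function.Bijective f) {p : E → ℝ≥0∞}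
    (hp : Measurable p) :
    (μ.withDensity fun x => ENNReal.ofReal |(f' x).det| * p (f x)).map f = μ.withDensity p := by
  have hcont : Continuous f := continuous_iff_continuousAt.2 fun x => (hf' x).continuousAt
  have hdet : AEMeasurable (fun x => ENNReal.ofReal |(f' x).det|) μ := by
    simpa using aemeasurable_ofReal_abs_det_fderivWithin μ MeasurableSet.univ
      fun x _ => (hf' x).hasFDerivWithinAt
  have hmap : (μ.withDensity fun x => ENNReal.ofReal |(f' x).det|).map f = μ := by
    simpa [hf.surjective.range_eq] using map_withDensity_abs_det_fderiv_eq_addHaar μ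
      nullMeasurableSet_univ (fun x _ => (hf' x).hasFDerivWithinAt) hf.injective.injOn
  have hmul : (μ.withDensity fun x => ENNReal.ofReal |(f' x).det| * p (f x)) =
      (μ.withDensity fun x => ENNReal.ofReal |(f' x).det|).withDensity fun x => p (f x) :=
    withDensity_mul₀ hdet (hp.comp hcont.measurable).aemeasurable
  rw [hmul, map_withDensity_comp hcont.measurable hp, hmap]

end Densities

section Gaussian

lemma pi_withDensity_ofReal {ι : Type*} [Fintype ι] {E : ι → Type*} [∀ i, MeasurableSpace (E i)]
    (μ : ∀ i, Measure (E i)) [∀ i, SigmaFinite (μ i)] {p : ∀ i, E i → ℝ}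
    (hp0 : ∀ i x, 0 ≤ p i x) (hp : ∀ i, Integrable (p i) (μ i)) :
    Measure.pi (fun i => (μ i).withDensity fun x => ENNReal.ofReal (p i x)) =
      (Measure.pi μ).withDensity fun x => ENNReal.ofReal (∏ i, p i (x i)) := by
  have (i : ι) : IsFiniteMeasure ((μ i).withDensity fun x => ENNReal.ofReal (p i x)) :=
    isFiniteMeasure_withDensity_ofReal (hp i).2
  refine Measure.pi_eq fun s hs => ?_
  have hps : ∀ i, Integrable (p i) ((μ i).restrict (s i)) := fun i => (hp i).integrableOn
  rw [withDensity_apply _ (MeasurableSet.univ_pi hs), Measure.restrict_pi_pi,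
    ← ofReal_integral_eq_lintegral_ofReal (Integrable.fintype_prod_dep hps)
      (ae_of_all _ fun x => Finset.prod_nonneg fun i _ => hp0 i (x i)),
    integral_fintype_prod_eq_prod,
    ENNReal.ofReal_prod_of_nonneg fun i _ => integral_nonneg (hp0 i)]
  refine Finset.prod_congr rfl fun i _ => ?_
  rw [withDensity_apply _ (hs i),
    ofReal_integral_eq_lintegral_ofReal (hps i) (ae_of_all _ (hp0 i))]

variable {ι κ : Type*} [Fintype ι] [Fintype κ] {σ2 : ℝ}

lemma gaussPi_eq_pi (hσ2 : 0 < σ2) :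
    gaussPi ι σ2 = Measure.pi fun _ => ProbabilityTheory.gaussianReal 0 σ2.toNNReal := by
  have hv : σ2.toNNReal ≠ 0 := (Real.toNNReal_pos.2 hσ2).ne'
  have hpi : 0 ≤ 2 * π * σ2 := by positivity
  simp only [ProbabilityTheory.gaussianReal_of_var_ne_zero 0 hv, ProbabilityTheory.gaussianPDF_def]
  rw [pi_withDensity_ofReal (fun _ => volume)
    (fun _ => ProbabilityTheory.gaussianPDFReal_nonneg 0 _)
    fun _ => ProbabilityTheory.integrable_gaussianPDFReal 0 _, gaussPi, volume_pi]
  congr 1 with x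
  simp only [ProbabilityTheory.gaussianPDFReal, Real.coe_toNNReal σ2 hσ2.le, sub_zero,
    Finset.prod_mul_distrib, Finset.prod_const, Finset.card_univ, ← Real.exp_sum,
    ← Finset.sum_div, Finset.sum_neg_distrib, enorm2_sq]
  rw [Real.sqrt_eq_rpow, ← Real.rpow_neg hpi, ← Real.rpow_mul_natCast hpi]
  ring_nf

lemma isProbabilityMeasure_gaussPi (hσ2 : 0 < σ2) : IsProbabilityMeasure (gaussPi ι σ2) := by
  rw [gaussPi_eq_pi hσ2]
  infer_instance

lemma charFun_gaussPi_map_toLp (hσ2 : 0 < σ2) (t : EuclideanSpace ℝ ι) :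
    charFun ((gaussPi ι σ2).map (WithLp.toLp 2)) t = Complex.exp (-(σ2 * ‖t‖ ^ 2 / 2 : ℝ)) := by
  rw [gaussPi_eq_pi hσ2, charFun_pi]
  simp_rw [ProbabilityTheory.charFun_gaussianReal, ← Complex.exp_sum,
    Real.coe_toNNReal σ2 hσ2.le, EuclideanSpace.real_norm_sq_eq]
  push_cast
  simp [Finset.mul_sum, Finset.sum_div]

lemma charFun_map_mulVec {ν : Measure (ι → ℝ)} (A : Matrix κ ι ℝ) (t : EuclideanSpace ℝ κ) :
    charFun ((ν.map (A *ᵥ ·)).map (WithLp.toLp 2)) t =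
      charFun (ν.map (WithLp.toLp 2)) (WithLp.toLp 2 (Aᵀ *ᵥ t.ofLp)) := by
  have hA : Measurable (A *ᵥ · : (ι → ℝ) → κ → ℝ) :=
    (Continuous.matrix_mulVec continuous_const continuous_id).measurable
  rw [Measure.map_map (by fun_prop) hA, charFun_apply, charFun_apply,
    integral_map (by fun_prop) (by fun_prop), integral_map (by fun_prop) (by fun_prop)]
  congr with u
  simp [EuclideanSpace.inner_eq_star_dotProduct, dotProduct_mulVec, mulVec_transpose]

lemma gaussPi_map_mulVec [DecidableEq κ] {A : Matrix κ ι ℝ} (hA : A * Aᵀ = 1) (hσ2 : 0 < σ2) :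
    (gaussPi ι σ2).map (A *ᵥ ·) = gaussPi κ σ2 := by
  have := isProbabilityMeasure_gaussPi (ι := ι) hσ2
  have := isProbabilityMeasure_gaussPi (ι := κ) hσ2
  have hAm : Measurable (A *ᵥ · : (ι → ℝ) → κ → ℝ) :=
    (Continuous.matrix_mulVec continuous_const continuous_id).measurable
  have := Measure.isProbabilityMeasure_map (μ := gaussPi ι σ2) hAm.aemeasurable
  refine (MeasurableEquiv.toLp 2 (κ → ℝ)).map_measurableEquiv_injective
    (Measure.ext_of_charFun (E := EuclideanSpace ℝ κ) (funext fun t => ?_))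
  have hnorm : ‖WithLp.toLp 2 (Aᵀ *ᵥ t.ofLp)‖ ^ 2 = ‖t‖ ^ 2 := by
    simpa [EuclideanSpace.real_norm_sq_eq, ← enorm2_sq, enorm2_sq_eq_dotProduct, hA]
      using enorm2_mulVec_sq Aᵀ t.ofLp
  calc _ = charFun ((gaussPi ι σ2).map (WithLp.toLp 2)) (WithLp.toLp 2 (Aᵀ *ᵥ t.ofLp)) :=
        charFun_map_mulVec A t
    _ = charFun ((gaussPi κ σ2).map (WithLp.toLp 2)) t := by
        rw [charFun_gaussPi_map_toLp hσ2, charFun_gaussPi_map_toLp hσ2, hnorm]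

lemma gaussPi_map_comp_inl_inr (hσ2 : 0 < σ2) :
    (gaussPi (ι ⊕ κ) σ2).map (fun u => (u ∘ Sum.inl, u ∘ Sum.inr)) =
      (gaussPi ι σ2).prod (gaussPi κ σ2) := by
  rw [gaussPi_eq_pi hσ2, gaussPi_eq_pi hσ2, gaussPi_eq_pi hσ2]
  exact (measurePreserving_sumPiEquivProdPi (X := fun _ : ι ⊕ κ => ℝ)
    fun _ => ProbabilityTheory.gaussianReal 0 σ2.toNNReal).map_eq

lemma gaussPi_map_mulVec_prodMk {m : Type*} [Fintype m] [DecidableEq ι] [DecidableEq κ]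
    {A : Matrix ι m ℝ} {B : Matrix κ m ℝ} (hA : A * Aᵀ = 1) (hB : B * Bᵀ = 1) (hAB : A * Bᵀ = 0)
    (hσ2 : 0 < σ2) :
    (gaussPi m σ2).map (fun u => (A *ᵥ u, B *ᵥ u)) = (gaussPi ι σ2).prod (gaussPi κ σ2) := by
  have hBA : B * Aᵀ = 0 := by simpa using congrArg transpose hAB
  have hrows : fromRows A B * (fromRows A B)ᵀ = 1 := by
    rw [transpose_fromRows, fromRows_mul_fromCols, hA, hB, hAB, hBA, fromBlocks_one]
  have hmeas : Measurable (fromRows A B *ᵥ · : (m → ℝ) → ι ⊕ κ → ℝ) :=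
    (Continuous.matrix_mulVec continuous_const continuous_id).measurable
  rw [← gaussPi_map_comp_inl_inr hσ2, ← gaussPi_map_mulVec hrows hσ2,
    Measure.map_map (by fun_prop) hmeas]
  congr

end Gaussian

section Profile

variable {a b : ℝ}

lemma hasDerivAt_hfun (ha : 0 < a) (ξ : ℝ) :
    HasDerivAt (hfun a b)
      ((1 + a * rexp (-ξ ^ 2 / b) + 2 / b * ξ ^ 2 * (a * rexp (-ξ ^ 2 / b))) /
        (1 + a * rexp (-ξ ^ 2 / b)) ^ 2) ξ := by
  have hexp : HasDerivAt (fun ξ : ℝ => -ξ ^ 2 / b) (-(2 * ξ) / b) ξ := by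
    simpa using (hasDerivAt_pow 2 ξ).neg.div_const b
  refine ((hasDerivAt_id ξ).div ((hexp.exp.const_mul a).const_add 1)
    (by positivity)).congr_deriv ?_
  rw [id_eq]
  ring

lemma hfun_strictMono (ha : 0 < a) (hb : 0 < b) : StrictMono (hfun a b) :=
  strictMono_of_deriv_pos fun ξ => by
    rw [(hasDerivAt_hfun ha ξ).deriv]
    positivity

lemma continuous_hfun (ha : 0 < a) : Continuous (hfun a b) :=
  continuous_iff_continuousAt.2 fun ξ => (hasDerivAt_hfun ha ξ).continuousAt

lemma hfun_neg (ξ : ℝ) : hfun a b (-ξ) = -hfun a b ξ := by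
  simp [hfun, neg_div]

lemma tendsto_hfun_atTop (ha : 0 < a) (hb : 0 < b) : Tendsto (hfun a b) atTop atTop := by
  refine tendsto_atTop_mono' _ ?_ (tendsto_id.atTop_div_const (r := 1 + a) (by positivity))
  filter_upwards [eventually_ge_atTop 0] with ξ hξ
  have hexp : rexp (-ξ ^ 2 / b) ≤ 1 := by
    rw [Real.exp_le_one_iff, neg_div, neg_nonpos]
    positivity
  unfold hfun
  gcongr
  · exact le_rfl
  · exact mul_le_of_le_one_right ha.le hexp

lemma hfun_surjective (ha : 0 < a) (hb : 0 < b) : Function.Surjective (hfun a b) := by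
  refine (continuous_hfun ha).surjective (tendsto_hfun_atTop ha hb) ?_
  refine (tendsto_neg_atTop_atBot.comp
    ((tendsto_hfun_atTop ha hb).comp tendsto_neg_atBot_atTop)).congr fun ξ => ?_
  simp [hfun_neg]

lemma gfun_hfun (ha : 0 < a) (hb : 0 < b) (ξ : ℝ) : gfun a b (hfun a b ξ) = ξ :=
  Function.leftInverse_invFun (hfun_strictMono ha hb).injective ξ

lemma hfun_gfun (ha : 0 < a) (hb : 0 < b) (r : ℝ) : hfun a b (gfun a b r) = r :=
  Function.rightInverse_invFun (hfun_surjective ha hb) r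

lemma continuous_gfun (ha : 0 < a) (hb : 0 < b) : Continuous (gfun a b) := by
  let e := (hfun_strictMono ha hb).orderIsoOfSurjective (hfun a b) (hfun_surjective ha hb)
  have he : gfun a b = e.symm := funext fun r =>
    (hfun_strictMono ha hb).injective ((hfun_gfun ha hb r).trans (e.apply_symm_apply r).symm)
  rw [he]
  exact e.symm.continuous

/-- The ratio `g_{a,b}(r) / r`, written so that it makes sense at `r = 0`. -/
def stretch (a b r : ℝ) : ℝ := 1 + a * rexp (-gfun a b r ^ 2 / b)

lemma one_le_stretch (ha : 0 < a) (r : ℝ) : 1 ≤ stretch a b r :=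
  le_add_of_nonneg_right (by positivity)

lemma gfun_eq_stretch_mul (ha : 0 < a) (hb : 0 < b) (r : ℝ) :
    gfun a b r = stretch a b r * r := by
  have hpos : 0 < stretch a b r := one_pos.trans_le (one_le_stretch ha r)
  have h := hfun_gfun ha hb r
  rw [hfun, ← stretch, div_eq_iff hpos.ne'] at h
  rw [h, mul_comm]

lemma le_gfun (ha : 0 < a) (hb : 0 < b) {r : ℝ} (hr : 0 ≤ r) : r ≤ gfun a b r := by
  rw [gfun_eq_stretch_mul ha hb]
  exact le_mul_of_one_le_left hr (one_le_stretch ha r)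

lemma continuous_stretch (ha : 0 < a) (hb : 0 < b) : Continuous (stretch a b) := by
  have := continuous_gfun ha hb
  unfold stretch
  fun_prop

end Profile

section Shrink

variable {ι : Type*} [Fintype ι] {a b : ℝ}

lemma det_smul_one_add_smul_vecMulVec [DecidableEq ι] {c : ℝ} (hc : c ≠ 0) (k : ℝ) (z : ι → ℝ) :
    (c • (1 : Matrix ι ι ℝ) + k • vecMulVec z z).det =
      c ^ Fintype.card ι * (1 + k / c * enorm2 z ^ 2) := by
  have hfactor : c • (1 : Matrix ι ι ℝ) + k • vecMulVec z z =
      c • (1 + replicateCol Unit ((k / c) • z) * replicateRow Unit z) := by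
    rw [smul_add, ← vecMulVec_eq, smul_vecMulVec, smul_smul, mul_div_cancel₀ k hc]
  rw [hfactor, det_smul, det_one_add_replicateCol_mul_replicateRow, dotProduct_smul, smul_eq_mul,
    enorm2_sq_eq_dotProduct]

lemma hasFDerivAt_smul_self_of_enorm2_sq [DecidableEq ι] {φ : ℝ → ℝ} {φ' : ℝ} {z : ι → ℝ}
    (hφ : HasDerivAt φ φ' (enorm2 z ^ 2)) :
    HasFDerivAt (fun z : ι → ℝ => φ (enorm2 z ^ 2) • z)
      (toLin' (φ (enorm2 z ^ 2) • (1 : Matrix ι ι ℝ) +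
        (2 * φ') • vecMulVec z z)).toContinuousLinearMap z := by
  obtain ⟨D, hD, hD_apply⟩ : ∃ D : (ι → ℝ) →L[ℝ] ℝ,
      HasFDerivAt (fun z : ι → ℝ => enorm2 z ^ 2) D z ∧ ∀ v, D v = 2 * (z ⬝ᵥ v) := by
    refine ⟨∑ i, (2 * z i) • ContinuousLinearMap.proj i, ?_, fun v => ?_⟩
    · simp only [enorm2_sq]
      exact HasFDerivAt.fun_sum fun i _ => by
        simpa using ((hasFDerivAt_apply (𝕜 := ℝ) i z).pow 2)
    · simp [dotProduct, Finset.mul_sum, mul_assoc]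
  refine ((hφ.comp_hasFDerivAt z hD).smul (hasFDerivAt_id z)).congr_fderiv
    (ContinuousLinearMap.ext fun v => ?_)
  change φ (enorm2 z ^ 2) • v + (φ' * D v) • z = toLin' _ v
  rw [hD_apply, toLin'_apply, add_mulVec, smul_mulVec, smul_mulVec, one_mulVec,
    vecMulVec_mulVec, op_smul_eq_smul]
  module

/-- Multiplication of `z` by the averaging weight `(1 + a exp(-‖z‖² / b))⁻¹`; on the ray through
`z` it acts as `h_{a,b}`, and its inverse is `gdir a b`. -/
def shrink (a b : ℝ) (z : ι → ℝ) : ι → ℝ := (1 + a * rexp (-enorm2 z ^ 2 / b))⁻¹ • z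

lemma enorm2_shrink (ha : 0 < a) (z : ι → ℝ) :
    enorm2 (shrink a b z) = hfun a b (enorm2 z) := by
  rw [shrink, enorm2_smul, abs_of_pos (by positivity), hfun, inv_mul_eq_div]

lemma gfun_enorm2_shrink (ha : 0 < a) (hb : 0 < b) (z : ι → ℝ) :
    gfun a b (enorm2 (shrink a b z)) = enorm2 z := by
  rw [enorm2_shrink ha, gfun_hfun ha hb]

lemma gdir_eq_stretch_smul (ha : 0 < a) (hb : 0 < b) (w : ι → ℝ) :
    gdir a b w = stretch a b (enorm2 w) • w := by
  rw [gdir]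
  split_ifs with hw
  · rw [hw, smul_zero]
  · rw [gfun_eq_stretch_mul ha hb, mul_div_cancel_right₀ _ (mt enorm2_eq_zero.1 hw)]

lemma gdir_shrink (ha : 0 < a) (hb : 0 < b) (z : ι → ℝ) : gdir a b (shrink a b z) = z := by
  rw [gdir_eq_stretch_smul ha hb, stretch, gfun_enorm2_shrink ha hb, shrink, smul_smul,
    mul_inv_cancel₀ (by positivity), one_smul]

lemma shrink_gdir (ha : 0 < a) (hb : 0 < b) (w : ι → ℝ) : shrink a b (gdir a b w) = w := by
  have hpos : 0 < stretch a b (enorm2 w) := one_pos.trans_le (one_le_stretch ha _)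
  have hnorm : enorm2 (gdir a b w) = gfun a b (enorm2 w) := by
    rw [gdir_eq_stretch_smul ha hb, enorm2_smul, abs_of_pos hpos, ← gfun_eq_stretch_mul ha hb]
  rw [shrink, hnorm, ← stretch, gdir_eq_stretch_smul ha hb, smul_smul, inv_mul_cancel₀ hpos.ne',
    one_smul]

lemma shrink_bijective (ha : 0 < a) (hb : 0 < b) :
    Function.Bijective (shrink a b : (ι → ℝ) → ι → ℝ) :=
  Function.bijective_iff_has_inverse.2 ⟨gdir a b, gdir_shrink ha hb, shrink_gdir ha hb⟩

lemma continuous_gdir (ha : 0 < a) (hb : 0 < b) : Continuous (gdir a b : (ι → ℝ) → ι → ℝ) := by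
  rw [funext (gdir_eq_stretch_smul ha hb)]
  exact ((continuous_stretch ha hb).comp continuous_enorm2).smul continuous_id

lemma continuous_shrink (ha : 0 < a) : Continuous (shrink a b : (ι → ℝ) → ι → ℝ) := by
  have := continuous_enorm2 (ι := ι)
  have hden : Continuous fun z : ι → ℝ => 1 + a * rexp (-enorm2 z ^ 2 / b) := by fun_prop
  exact (hden.inv₀ fun z => by positivity).smul continuous_id

/-- The reciprocal Jacobian of `shrink a b` in dimension `d` at a point of norm `ξ`. -/
def radialWeight (a b : ℝ) (d : ℕ) (ξ : ℝ) : ℝ :=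
  (1 + a * rexp (-ξ ^ 2 / b)) ^ d * (1 + 2 / b * ξ ^ 2 * (1 + a⁻¹ * rexp (ξ ^ 2 / b))⁻¹)⁻¹

lemma radialWeight_pos (ha : 0 < a) (hb : 0 < b) (d : ℕ) (ξ : ℝ) : 0 < radialWeight a b d ξ := by
  unfold radialWeight
  positivity

lemma continuous_radialWeight (ha : 0 < a) (hb : 0 < b) (d : ℕ) :
    Continuous (radialWeight a b d) := by
  have hinner : Continuous fun ξ : ℝ => (1 + a⁻¹ * rexp (ξ ^ 2 / b))⁻¹ :=
    Continuous.inv₀ (by fun_prop) fun ξ => by positivity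
  exact Continuous.mul (by fun_prop) (Continuous.inv₀ (by fun_prop) fun ξ => by positivity)

lemma exists_hasFDerivAt_shrink (ha : 0 < a) (hb : 0 < b) (z : ι → ℝ) :
    ∃ L : (ι → ℝ) →L[ℝ] ι → ℝ, HasFDerivAt (shrink a b) L z ∧
      L.det = (radialWeight a b (Fintype.card ι) (enorm2 z))⁻¹ := by
  classical
  set s := enorm2 z ^ 2 with hs
  set e := rexp (-s / b) with he
  have he_pos : 0 < e := Real.exp_pos _
  have hweight : HasDerivAt (fun s : ℝ => (1 + a * rexp (-s / b))⁻¹)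
      ((1 + a * e)⁻¹ ^ 2 * (a * e / b)) s := by
    have hexp : HasDerivAt (fun s : ℝ => rexp (-s / b)) (e * (-1 / b)) s :=
      ((hasDerivAt_id s).neg.div_const b).exp
    refine (((hexp.const_mul a).const_add 1).inv (by positivity)).congr_deriv ?_
    rw [← he]
    field_simp
  refine ⟨_, hasFDerivAt_smul_self_of_enorm2_sq hweight, ?_⟩
  have he_inv : rexp (s / b) = e⁻¹ := by rw [he, ← Real.exp_neg, neg_div, neg_neg]
  rw [ContinuousLinearMap.det, LinearMap.coe_toContinuousLinearMap, LinearMap.det_toLin',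
    det_smul_one_add_smul_vecMulVec (by positivity), radialWeight, ← hs, ← he, he_inv,
    mul_inv, inv_inv, inv_pow]
  congr 2
  field_simp
  ring

lemma map_shrink_withDensity (ha : 0 < a) (hb : 0 < b) {p : (ι → ℝ) → ℝ≥0∞} (hp : Measurable p) :
    (volume.withDensity p).map (shrink a b) = volume.withDensity fun w =>
      ENNReal.ofReal (radialWeight a b (Fintype.card ι) (gfun a b (enorm2 w))) *
        p (gdir a b w) := by
  choose L hL hdet using exists_hasFDerivAt_shrink (ι := ι) ha hb
  have hmeas : Measurable fun w : ι → ℝ =>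
      ENNReal.ofReal (radialWeight a b (Fintype.card ι) (gfun a b (enorm2 w))) *
        p (gdir a b w) :=
    (((continuous_radialWeight ha hb _).comp
      ((continuous_gfun ha hb).comp continuous_enorm2)).measurable.ennreal_ofReal).mul
      (hp.comp (continuous_gdir ha hb).measurable)
  rw [← map_withDensity_abs_det_fderiv_mul hL (shrink_bijective ha hb) hmeas]
  congr 2 with z
  have hpos := radialWeight_pos ha hb (Fintype.card ι) (enorm2 z)
  rw [hdet, gfun_enorm2_shrink ha hb, gdir_shrink ha hb, abs_of_pos (inv_pos.2 hpos), ← mul_assoc,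
    ← ENNReal.ofReal_mul (inv_pos.2 hpos).le, inv_mul_cancel₀ hpos.ne', ENNReal.ofReal_one,
    one_mul]

end Shrink

section SquareRoot

variable {ι : Type*} [Fintype ι] [DecidableEq ι] {A : Matrix ι ι ℝ}

lemma msqrt_of_posSemidef (hA : A.PosSemidef) :
    msqrt A = (hA.isHermitian.eigenvectorUnitary : Matrix ι ι ℝ) *
      diagonal (Real.sqrt ∘ hA.isHermitian.eigenvalues) *
      star (hA.isHermitian.eigenvectorUnitary : Matrix ι ι ℝ) :=
  dif_pos hA

lemma transpose_msqrt (hA : A.PosSemidef) : (msqrt A)ᵀ = msqrt A := by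
  simp [msqrt_of_posSemidef hA, star_eq_conjTranspose, transpose_mul, Matrix.mul_assoc]

lemma msqrt_mul_self (hA : A.PosSemidef) : msqrt A * msqrt A = A := by
  have hdiag : diagonal (Real.sqrt ∘ hA.isHermitian.eigenvalues) *
      diagonal (Real.sqrt ∘ hA.isHermitian.eigenvalues) =
      diagonal hA.isHermitian.eigenvalues := by
    rw [diagonal_mul_diagonal]
    exact congrArg diagonal (funext fun i => Real.mul_self_sqrt (hA.eigenvalues_nonneg i))
  have hspec := hA.isHermitian.spectral_theorem
  rw [Unitary.conjStarAlgAut_apply] at hspec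
  rw [msqrt_of_posSemidef hA]
  set U := hA.isHermitian.eigenvectorUnitary
  calc (U : Matrix ι ι ℝ) * diagonal (Real.sqrt ∘ hA.isHermitian.eigenvalues) *
        star (U : Matrix ι ι ℝ) *
        (U * diagonal (Real.sqrt ∘ hA.isHermitian.eigenvalues) * star (U : Matrix ι ι ℝ))
      = U * (diagonal (Real.sqrt ∘ hA.isHermitian.eigenvalues) *
          (star (U : Matrix ι ι ℝ) * U) *
          diagonal (Real.sqrt ∘ hA.isHermitian.eigenvalues)) * star (U : Matrix ι ι ℝ) := by
        simp only [Matrix.mul_assoc]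
    _ = U * diagonal hA.isHermitian.eigenvalues * star (U : Matrix ι ι ℝ) := by
        rw [Unitary.coe_star_mul_self, Matrix.mul_one, hdiag]
    _ = A := hspec.symm

lemma transpose_msqrt_mul_msqrt (hA : A.PosSemidef) : (msqrt A)ᵀ * msqrt A = A := by
  rw [transpose_msqrt hA, msqrt_mul_self hA]

lemma abs_det_msqrt (hA : A.PosSemidef) : |(msqrt A).det| = √A.det := by
  rw [← Real.sqrt_sq_eq_abs, sq, ← det_mul, msqrt_mul_self hA]

lemma isUnit_det_msqrt (hA : A.PosDef) : IsUnit (msqrt A).det := by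
  rw [isUnit_iff_ne_zero, ← abs_pos, abs_det_msqrt hA.posSemidef]
  exact Real.sqrt_pos.2 hA.det_pos

lemma inv_msqrt_mul_inv_msqrt (hA : A.PosSemidef) : (msqrt A)⁻¹ * (msqrt A)⁻¹ = A⁻¹ := by
  rw [← Matrix.mul_inv_rev, msqrt_mul_self hA]

lemma msqrt_mul_inv (hA : A.PosDef) : msqrt A * A⁻¹ = (msqrt A)⁻¹ := by
  rw [← inv_msqrt_mul_inv_msqrt hA.posSemidef,
    mul_nonsing_inv_cancel_left _ _ (isUnit_det_msqrt hA)]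

lemma msqrt_inv_mul_self (hA : A.PosDef) : (msqrt A)⁻¹ * A = msqrt A :=
  calc (msqrt A)⁻¹ * A = (msqrt A)⁻¹ * (msqrt A * msqrt A) := by
        rw [msqrt_mul_self hA.posSemidef]
    _ = msqrt A := nonsing_inv_mul_cancel_left _ _ (isUnit_det_msqrt hA)

lemma whiten_mul_transpose_self {m : Type*} [Fintype m] (hA : A.PosDef) {W : Matrix ι m ℝ}
    (hW : W * Wᵀ = A) : (msqrt A)⁻¹ * W * ((msqrt A)⁻¹ * W)ᵀ = 1 := by
  have hunit := isUnit_det_msqrt hA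
  rw [transpose_mul, transpose_nonsing_inv, transpose_msqrt hA.posSemidef]
  calc (msqrt A)⁻¹ * W * (Wᵀ * (msqrt A)⁻¹) = (msqrt A)⁻¹ * (W * Wᵀ) * (msqrt A)⁻¹ := by
        simp only [Matrix.mul_assoc]
    _ = 1 := by rw [hW, msqrt_inv_mul_self hA, mul_nonsing_inv _ hunit]

end SquareRoot

section AffineMaps

variable {ι : Type*} [Fintype ι] [DecidableEq ι] {M : Matrix ι ι ℝ} {p : (ι → ℝ) → ℝ≥0∞}

lemma map_withDensity_mulVec_add (hM : M.det ≠ 0) (c : ι → ℝ) (hp : Measurable p) :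
    (volume.withDensity fun x => ENNReal.ofReal |M.det| * p (M *ᵥ x + c)).map
      (fun x => M *ᵥ x + c) = volume.withDensity p := by
  have hderiv : ∀ x, HasFDerivAt (fun x => M *ᵥ x + c) (toLin' M).toContinuousLinearMap x :=
    fun x => (toLin' M).toContinuousLinearMap.hasFDerivAt.add_const c
  have hunit : IsUnit M := (isUnit_iff_isUnit_det M).2 hM.isUnit
  have hbij : Function.Bijective fun x => M *ᵥ x + c :=
    (Equiv.addRight c).bijective.comp
      ⟨mulVec_injective_of_isUnit hunit, mulVec_surjective_iff_isUnit.2 hunit⟩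
  simpa [ContinuousLinearMap.det, LinearMap.det_toLin'] using
    map_withDensity_abs_det_fderiv_mul (μ := volume) hderiv hbij hp

lemma eq_withDensity_of_map_mulVec_add (hM : M.det ≠ 0) {c : ι → ℝ} (hp : Measurable p)
    {ν : Measure (ι → ℝ)} (hν : ν.map (fun x => M *ᵥ x + c) = volume.withDensity p) :
    ν = volume.withDensity fun x => ENNReal.ofReal |M.det| * p (M *ᵥ x + c) := by
  have hinj : Function.Injective fun x => M *ᵥ x + c :=
    (add_left_injective c).comp (mulVec_injective_of_isUnit
      ((isUnit_iff_isUnit_det M).2 hM.isUnit))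
  have hemb : MeasurableEmbedding fun x => M *ᵥ x + c :=
    Continuous.measurableEmbedding
      ((Continuous.matrix_mulVec continuous_const continuous_id).add continuous_const) hinj
  rw [← hemb.comap_map ν, hν, ← map_withDensity_mulVec_add hM c hp, hemb.comap_map]

end AffineMaps

section SchurComplement

variable {ι κ : Type*}

lemma posDef_toBlocks₁₁ {Q : Matrix (ι ⊕ κ) (ι ⊕ κ) ℝ} (hQ : Q.PosDef) : Q.toBlocks₁₁.PosDef :=
  hQ.submatrix Sum.inl_injective

lemma toBlocks₂₁_eq_transpose {Q : Matrix (ι ⊕ κ) (ι ⊕ κ) ℝ} (hQ : Q.PosDef) :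
    Q.toBlocks₂₁ = Q.toBlocks₁₂ᵀ := by
  ext i j
  simpa [toBlocks₂₁, toBlocks₁₂] using (hQ.1.apply (Sum.inr i) (Sum.inl j)).symm

variable [Fintype ι] [DecidableEq ι]

/-- The Schur complement `Q₂₂ - Q₂₁ Q₁₁⁻¹ Q₁₂` of the upper left block. -/
def schur (Q : Matrix (ι ⊕ κ) (ι ⊕ κ) ℝ) : Matrix κ κ ℝ :=
  Q.toBlocks₂₂ - Q.toBlocks₂₁ * Q.toBlocks₁₁⁻¹ * Q.toBlocks₁₂

/-- The coefficient matrix `Q₁₁⁻¹ Q₁₂` of the regression of the second block of variables on the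
first one. -/
def regCoef (Q : Matrix (ι ⊕ κ) (ι ⊕ κ) ℝ) : Matrix ι κ ℝ := Q.toBlocks₁₁⁻¹ * Q.toBlocks₁₂

lemma regCoef_smul {c : ℝ} (hc : c ≠ 0) {Q : Matrix (ι ⊕ κ) (ι ⊕ κ) ℝ}
    (hQ : Q.toBlocks₁₁.PosDef) : regCoef (c • Q) = regCoef Q := by
  have hinv : (c • Q.toBlocks₁₁)⁻¹ = c⁻¹ • Q.toBlocks₁₁⁻¹ :=
    inv_smul' _ (Units.mk0 c hc) hQ.det_pos.ne'.isUnit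
  change (c • Q.toBlocks₁₁)⁻¹ * (c • Q.toBlocks₁₂) = regCoef Q
  rw [hinv, smul_mul, Matrix.mul_smul, smul_smul, inv_mul_cancel₀ hc, one_smul, regCoef]

lemma schur_eq_sub_mul_regCoef (Q : Matrix (ι ⊕ κ) (ι ⊕ κ) ℝ) :
    schur Q = Q.toBlocks₂₂ - Q.toBlocks₂₁ * regCoef Q := by
  rw [schur, regCoef, Matrix.mul_assoc]

lemma schur_smul {c : ℝ} (hc : c ≠ 0) {Q : Matrix (ι ⊕ κ) (ι ⊕ κ) ℝ}
    (hQ : Q.toBlocks₁₁.PosDef) : schur (c • Q) = c • schur Q := by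
  rw [schur_eq_sub_mul_regCoef, schur_eq_sub_mul_regCoef, regCoef_smul hc hQ, smul_sub,
    ← smul_mul]
  rfl

lemma msqrt_mul_regCoef {Q : Matrix (ι ⊕ κ) (ι ⊕ κ) ℝ} (hQ : Q.toBlocks₁₁.PosDef) :
    msqrt Q.toBlocks₁₁ * regCoef Q = (msqrt Q.toBlocks₁₁)⁻¹ * Q.toBlocks₁₂ := by
  rw [regCoef, ← Matrix.mul_assoc, msqrt_mul_inv hQ]

variable {Q : Matrix (ι ⊕ κ) (ι ⊕ κ) ℝ}

lemma dotProduct_mulVec_eq_add_schur [Fintype κ] (hQ : Q.PosDef) (t : ι ⊕ κ → ℝ) :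
    t ⬝ᵥ Q *ᵥ t =
      (t ∘ Sum.inl + regCoef Q *ᵥ (t ∘ Sum.inr)) ⬝ᵥ
        Q.toBlocks₁₁ *ᵥ (t ∘ Sum.inl + regCoef Q *ᵥ (t ∘ Sum.inr)) +
      (t ∘ Sum.inr) ⬝ᵥ schur Q *ᵥ (t ∘ Sum.inr) := by
  let _ : Invertible Q.toBlocks₁₁ :=
    invertibleOfIsUnitDet _ (posDef_toBlocks₁₁ hQ).det_pos.ne'.isUnit
  simpa only [star_trivial, conjTranspose_eq_transpose_of_trivial, ← toBlocks₂₁_eq_transpose hQ,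
    fromBlocks_toBlocks, ← dotProduct_mulVec, Sum.elim_comp_inl_inr, regCoef, schur] using
    schur_complement_eq₁₁ Q.toBlocks₁₂ Q.toBlocks₂₂ (t ∘ Sum.inl) (t ∘ Sum.inr)
      (posDef_toBlocks₁₁ hQ).1

lemma posDef_schur [Finite κ] (hQ : Q.PosDef) : (schur Q).PosDef := by
  have := Fintype.ofFinite κ
  refine Matrix.PosDef.of_dotProduct_mulVec_pos ?_ fun x hx => ?_
  · have h := (IsHermitian.fromBlocks₁₁ Q.toBlocks₁₂ Q.toBlocks₂₂ (posDef_toBlocks₁₁ hQ).1).1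
    simp only [conjTranspose_eq_transpose_of_trivial, ← toBlocks₂₁_eq_transpose hQ,
      fromBlocks_toBlocks] at h
    exact h hQ.1
  · have hne : Sum.elim (-(regCoef Q *ᵥ x)) x ≠ 0 := fun h =>
      hx (funext fun i => congrFun h (Sum.inr i))
    simpa [dotProduct_mulVec_eq_add_schur hQ] using hQ.dotProduct_mulVec_pos hne

lemma det_eq_mul_det_schur [Fintype κ] [DecidableEq κ] (hQ : Q.PosDef) :
    Q.det = Q.toBlocks₁₁.det * (schur Q).det := by
  let _ : Invertible Q.toBlocks₁₁ :=
    invertibleOfIsUnitDet _ (posDef_toBlocks₁₁ hQ).det_pos.ne'.isUnit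
  conv_lhs => rw [← fromBlocks_toBlocks Q, det_fromBlocks₁₁, invOf_eq_nonsing_inv, ← schur]

end SchurComplement

section CanonicalForm

@[fun_prop]
lemma measurable_sumElim {ι κ Ω : Type*} [MeasurableSpace Ω] {f : Ω → ι → ℝ} {g : Ω → κ → ℝ}
    (hf : Measurable f) (hg : Measurable g) : Measurable fun x => Sum.elim (f x) (g x) :=
  (MeasurableEquiv.sumPiEquivProdPi fun _ : ι ⊕ κ => ℝ).symm.measurable.comp (hf.prodMk hg)

variable {ι κ : Type*} [Fintype ι] [Fintype κ] {a b σ2 : ℝ}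

/-- The Lebesgue density of the `N(0, σ² I)` distribution. -/
def gaussDens (σ2 : ℝ) (x : ι → ℝ) : ℝ :=
  (2 * π * σ2) ^ (-(Fintype.card ι : ℝ) / 2) * rexp (-enorm2 x ^ 2 / (2 * σ2))

lemma gaussPi_eq_withDensity (σ2 : ℝ) :
    gaussPi ι σ2 = volume.withDensity fun x => ENNReal.ofReal (gaussDens σ2 x) :=
  rfl

lemma gaussDens_nonneg (hσ2 : 0 < σ2) (x : ι → ℝ) : 0 ≤ gaussDens σ2 x := by
  unfold gaussDens
  positivity

lemma continuous_gaussDens (σ2 : ℝ) : Continuous (gaussDens σ2 : (ι → ℝ) → ℝ) := by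
  have := continuous_enorm2 (ι := ι)
  unfold gaussDens
  fun_prop

lemma gaussPi_map_add_right (σ2 : ℝ) (m : ι → ℝ) :
    (gaussPi ι σ2).map (· + m) =
      volume.withDensity fun x => ENNReal.ofReal (gaussDens σ2 (x - m)) := by
  have hmeas : Measurable fun x : ι → ℝ => ENNReal.ofReal (gaussDens σ2 (x - m)) :=
    ((continuous_gaussDens σ2).comp (continuous_id.sub continuous_const)).measurable.ennreal_ofReal
  have h := map_withDensity_comp (μ := volume) (measurable_add_const m) hmeas
  simpa only [add_sub_cancel_right, map_add_right_eq_self, ← gaussPi_eq_withDensity] using h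

lemma prod_withDensity_map_sumElim {p : (ι → ℝ) → ℝ≥0∞} {q : (κ → ℝ) → ℝ≥0∞} (hp : Measurable p)
    (hq : Measurable q) :
    ((volume.withDensity p).prod (volume.withDensity q)).map (fun z => Sum.elim z.1 z.2) =
      volume.withDensity fun u : ι ⊕ κ → ℝ => p (u ∘ Sum.inl) * q (u ∘ Sum.inr) := by
  have hvol := volume_measurePreserving_sumPiEquivProdPi_symm fun _ : ι ⊕ κ => ℝ
  have helim : (fun z : (ι → ℝ) × (κ → ℝ) => Sum.elim z.1 z.2) =
      (MeasurableEquiv.sumPiEquivProdPi fun _ : ι ⊕ κ => ℝ).symm := by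
    ext z (i | i) <;> rfl
  rw [← helim] at hvol
  have hmul : Measurable fun u : ι ⊕ κ → ℝ => p (u ∘ Sum.inl) * q (u ∘ Sum.inr) :=
    (hp.comp (by fun_prop)).mul (hq.comp (by fun_prop))
  rw [prod_withDensity hp hq, ← hvol.map_eq, ← map_withDensity_comp hvol.measurable hmul]
  rfl

/-- The law of `(Z₁, shrink (Z₂ + m))` for independent `N(0, σ² I)` vectors `Z₁`, `Z₂`: the
distribution of the model averaging estimator for an orthonormal design. -/
def canonicalLaw (a b σ2 : ℝ) (m : κ → ℝ) : Measure (ι ⊕ κ → ℝ) :=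
  ((gaussPi ι σ2).prod (gaussPi κ σ2)).map fun z => Sum.elim z.1 (shrink a b (z.2 + m))

/-- The Lebesgue density of `canonicalLaw`. -/
def canonicalDens (a b σ2 : ℝ) (m : κ → ℝ) (u : ι ⊕ κ → ℝ) : ℝ :=
  gaussDens σ2 (u ∘ Sum.inl) *
    (radialWeight a b (Fintype.card κ) (gfun a b (enorm2 (u ∘ Sum.inr))) *
      gaussDens σ2 (gdir a b (u ∘ Sum.inr) - m))

lemma isProbabilityMeasure_canonicalLaw (ha : 0 < a) (hσ2 : 0 < σ2) (m : κ → ℝ) :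
    IsProbabilityMeasure (canonicalLaw a b σ2 m : Measure (ι ⊕ κ → ℝ)) := by
  have := isProbabilityMeasure_gaussPi (ι := ι) hσ2
  have := isProbabilityMeasure_gaussPi (ι := κ) hσ2
  have hshrink := (continuous_shrink (ι := κ) (b := b) ha).measurable
  exact Measure.isProbabilityMeasure_map (by fun_prop)

lemma canonicalDens_nonneg (ha : 0 < a) (hb : 0 < b) (hσ2 : 0 < σ2) (m : κ → ℝ)
    (u : ι ⊕ κ → ℝ) : 0 ≤ canonicalDens a b σ2 m u :=
  mul_nonneg (gaussDens_nonneg hσ2 _)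
    (mul_nonneg (radialWeight_pos ha hb _ _).le (gaussDens_nonneg hσ2 _))

lemma continuous_canonicalDens (ha : 0 < a) (hb : 0 < b) (σ2 : ℝ) (m : κ → ℝ) :
    Continuous (canonicalDens a b σ2 m : (ι ⊕ κ → ℝ) → ℝ) := by
  have hinr : Continuous fun u : ι ⊕ κ → ℝ => u ∘ Sum.inr := by fun_prop
  have hweight := (continuous_radialWeight ha hb (Fintype.card κ)).comp
    ((continuous_gfun ha hb).comp (continuous_enorm2.comp hinr))
  have hdens := (continuous_gaussDens σ2).comp
    (((continuous_gdir ha hb).comp hinr).sub (continuous_const (y := m)))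
  exact ((continuous_gaussDens σ2).comp (by fun_prop)).mul (hweight.mul hdens)

lemma canonicalLaw_eq_withDensity (ha : 0 < a) (hb : 0 < b) (hσ2 : 0 < σ2) (m : κ → ℝ) :
    (canonicalLaw a b σ2 m : Measure (ι ⊕ κ → ℝ)) =
      volume.withDensity fun u => ENNReal.ofReal (canonicalDens a b σ2 m u) := by
  have := isProbabilityMeasure_gaussPi (ι := ι) hσ2
  have := isProbabilityMeasure_gaussPi (ι := κ) hσ2
  have hshift : Measurable fun x : κ → ℝ => shrink a b (x + m) :=
    ((continuous_shrink ha).comp (continuous_id.add continuous_const)).measurable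
  have hdens : Measurable (gaussDens σ2 : (ι → ℝ) → ℝ) := (continuous_gaussDens σ2).measurable
  have hshifted : Measurable fun x : κ → ℝ => ENNReal.ofReal (gaussDens σ2 (x - m)) :=
    ((continuous_gaussDens σ2).comp (continuous_id.sub continuous_const)).measurable.ennreal_ofReal
  have hpulled : Measurable fun w : κ → ℝ =>
      ENNReal.ofReal (radialWeight a b (Fintype.card κ) (gfun a b (enorm2 w))) *
        ENNReal.ofReal (gaussDens σ2 (gdir a b w - m)) :=
    ((continuous_radialWeight ha hb _).comp
      ((continuous_gfun ha hb).comp continuous_enorm2)).measurable.ennreal_ofReal.mul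
      (hshifted.comp (continuous_gdir ha hb).measurable)
  have hsnd : (gaussPi κ σ2).map (fun x => shrink a b (x + m)) =
      volume.withDensity fun w =>
        ENNReal.ofReal (radialWeight a b (Fintype.card κ) (gfun a b (enorm2 w))) *
          ENNReal.ofReal (gaussDens σ2 (gdir a b w - m)) := by
    rw [← map_shrink_withDensity ha hb hshifted, ← gaussPi_map_add_right,
      Measure.map_map (continuous_shrink ha).measurable (by fun_prop)]
    rfl
  calc (canonicalLaw a b σ2 m : Measure (ι ⊕ κ → ℝ))
      = ((gaussPi ι σ2).prod ((gaussPi κ σ2).map fun x => shrink a b (x + m))).map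
          fun z => Sum.elim z.1 z.2 := by
        rw [canonicalLaw, ← Measure.map_id (μ := gaussPi ι σ2),
          Measure.map_prod_map _ _ measurable_id hshift, Measure.map_id,
          Measure.map_map (by fun_prop) (by fun_prop)]
        rfl
    _ = _ := by
        rw [hsnd, gaussPi_eq_withDensity, prod_withDensity_map_sumElim (by fun_prop) hpulled]
        congr with u
        rw [canonicalDens, ENNReal.ofReal_mul (gaussDens_nonneg hσ2 _),
          ENNReal.ofReal_mul (radialWeight_pos ha hb _ _).le]

end CanonicalForm

section Standardize

variable {ι κ : Type*} [Fintype ι] [DecidableEq ι] [Fintype κ] [DecidableEq κ]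
  {Q : Matrix (ι ⊕ κ) (ι ⊕ κ) ℝ} {a b σ2 : ℝ}

/-- The linear part of `standardize`: a block triangular square root of `Q`. -/
def blockSqrt (Q : Matrix (ι ⊕ κ) (ι ⊕ κ) ℝ) : Matrix (ι ⊕ κ) (ι ⊕ κ) ℝ :=
  fromBlocks (msqrt Q.toBlocks₁₁) (msqrt Q.toBlocks₁₁ * regCoef Q) 0 (msqrt (schur Q))

/-- The affine coordinates in which a design with Gram matrix `Q` becomes orthonormal and the
value `t₂ = -γ`, at which the estimate of `β₂` vanishes, becomes the origin. -/
def standardize (Q : Matrix (ι ⊕ κ) (ι ⊕ κ) ℝ) (γ : κ → ℝ) (t : ι ⊕ κ → ℝ) : ι ⊕ κ → ℝ :=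
  blockSqrt Q *ᵥ t + Sum.elim (fun _ => 0) (msqrt (schur Q) *ᵥ γ)

lemma standardize_eq_sumElim (γ : κ → ℝ) (t : ι ⊕ κ → ℝ) :
    standardize Q γ t = Sum.elim
      (msqrt Q.toBlocks₁₁ *ᵥ (t ∘ Sum.inl + regCoef Q *ᵥ (t ∘ Sum.inr)))
      (msqrt (schur Q) *ᵥ (t ∘ Sum.inr + γ)) := by
  rw [standardize, blockSqrt, fromBlocks_mulVec]
  ext (i | i) <;> simp [mulVec_add]

lemma abs_det_blockSqrt (hQ : Q.PosDef) : |(blockSqrt Q).det| = √Q.det := by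
  rw [blockSqrt, det_fromBlocks_zero₂₁, abs_mul, abs_det_msqrt (posDef_toBlocks₁₁ hQ).posSemidef,
    abs_det_msqrt (posDef_schur hQ).posSemidef, det_eq_mul_det_schur hQ,
    Real.sqrt_mul (posDef_toBlocks₁₁ hQ).det_pos.le]

/-- The density of the model averaging estimator in the original coordinates, for a design with
Gram matrix `Q`. It is written with quadratic forms rather than with square roots of matrices, so
that its continuity in `Q` is that of determinants and inverses. -/
def quadDens (a b σ2 : ℝ) (Q : Matrix (ι ⊕ κ) (ι ⊕ κ) ℝ) (γ : κ → ℝ) (t : ι ⊕ κ → ℝ) : ℝ :=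
  let y := t ∘ Sum.inl + regCoef Q *ᵥ (t ∘ Sum.inr)
  let v := t ∘ Sum.inr + γ
  let r := √(v ⬝ᵥ schur Q *ᵥ v)
  let x := stretch a b r • v - γ
  (2 * π * σ2) ^ (-(Fintype.card (ι ⊕ κ) : ℝ) / 2) * √Q.det *
    rexp (-(y ⬝ᵥ Q.toBlocks₁₁ *ᵥ y) / (2 * σ2)) * radialWeight a b (Fintype.card κ) (gfun a b r) *
    rexp (-(x ⬝ᵥ schur Q *ᵥ x) / (2 * σ2))

lemma rpow_neg_add_div_two {c : ℝ} (hc : 0 < c) (x y : ℝ) :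
    c ^ (-(x + y) / 2) = c ^ (-x / 2) * c ^ (-y / 2) := by
  rw [← Real.rpow_add hc]
  ring_nf

lemma sqrt_det_mul_canonicalDens (ha : 0 < a) (hb : 0 < b) (hσ2 : 0 < σ2)
    {T₁ : Matrix ι ι ℝ} {T₂ : Matrix κ κ ℝ} (hT₁ : T₁ᵀ * T₁ = Q.toBlocks₁₁)
    (hT₂ : T₂ᵀ * T₂ = schur Q) (γ : κ → ℝ) (t : ι ⊕ κ → ℝ) :
    √Q.det * canonicalDens a b σ2 (T₂ *ᵥ γ)
        (Sum.elim (T₁ *ᵥ (t ∘ Sum.inl + regCoef Q *ᵥ (t ∘ Sum.inr)))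
          (T₂ *ᵥ (t ∘ Sum.inr + γ))) =
      quadDens a b σ2 Q γ t := by
  have hnorm (v : κ → ℝ) : enorm2 (T₂ *ᵥ v) = √(v ⬝ᵥ schur Q *ᵥ v) := by
    rw [← hT₂, ← enorm2_mulVec_sq, Real.sqrt_sq (enorm2_nonneg _)]
  rw [canonicalDens, Sum.elim_comp_inl, Sum.elim_comp_inr, gdir_eq_stretch_smul ha hb,
    ← mulVec_smul, ← mulVec_sub, gaussDens, gaussDens, enorm2_mulVec_sq, enorm2_mulVec_sq,
    hnorm, hT₁, hT₂, quadDens, Fintype.card_sum,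
    Nat.cast_add, rpow_neg_add_div_two (by positivity)]
  ring

lemma isDensityOf_quadDens (hQ : Q.PosDef) (ha : 0 < a) (hb : 0 < b) (hσ2 : 0 < σ2) {γ : κ → ℝ}
    {ν : Measure (ι ⊕ κ → ℝ)}
    (hν : ν.map (standardize Q γ) = canonicalLaw a b σ2 (msqrt (schur Q) *ᵥ γ)) :
    IsDensityOf (quadDens a b σ2 Q γ) ν volume := by
  have hdens (t : ι ⊕ κ → ℝ) : quadDens a b σ2 Q γ t =
      |(blockSqrt Q).det| * canonicalDens a b σ2 (msqrt (schur Q) *ᵥ γ) (standardize Q γ t) := by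
    rw [abs_det_blockSqrt hQ, standardize_eq_sumElim, sqrt_det_mul_canonicalDens ha hb hσ2
      (transpose_msqrt_mul_msqrt (posDef_toBlocks₁₁ hQ).posSemidef)
      (transpose_msqrt_mul_msqrt (posDef_schur hQ).posSemidef)]
  have hdet : (blockSqrt Q).det ≠ 0 := by
    rw [← abs_pos, abs_det_blockSqrt hQ]
    exact Real.sqrt_pos.2 hQ.det_pos
  have hstd : Continuous (standardize Q γ) :=
    (Continuous.matrix_mulVec continuous_const continuous_id).add continuous_const
  have hcanon := continuous_canonicalDens (ι := ι) ha hb σ2 (msqrt (schur Q) *ᵥ γ)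
  refine ⟨?_, fun t => ?_, ?_, ?_⟩
  · rw [funext hdens]
    exact (continuous_const.mul (hcanon.comp hstd)).measurable
  · rw [hdens]
    exact mul_nonneg (abs_nonneg _) (canonicalDens_nonneg ha hb hσ2 _ _)
  · rw [canonicalLaw_eq_withDensity ha hb hσ2] at hν
    rw [eq_withDensity_of_map_mulVec_add hdet hcanon.measurable.ennreal_ofReal hν]
    congr with t
    rw [hdens, ENNReal.ofReal_mul (abs_nonneg _), standardize]
  · have := isProbabilityMeasure_canonicalLaw (ι := ι) (b := b) ha hσ2 (msqrt (schur Q) *ᵥ γ)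
    rw [← hν] at this
    exact Measure.isProbabilityMeasure_of_map (standardize Q γ)

end Standardize

section GaussCov

variable {ι : Type*} [Fintype ι] [DecidableEq ι] {R : Matrix ι ι ℝ} {σ2 : ℝ}

lemma gaussCovDens_eq (hR : R.PosDef) (x : ι → ℝ) :
    gaussCovDens σ2 R x = |(msqrt R).det| * gaussDens σ2 (msqrt R *ᵥ x) := by
  rw [abs_det_msqrt hR.posSemidef, gaussDens, enorm2_mulVec_sq,
    transpose_msqrt_mul_msqrt hR.posSemidef, gaussCovDens]
  ring

lemma gaussCov_map_msqrt_mulVec (hR : R.PosDef) :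
    (gaussCov σ2 R).map (msqrt R *ᵥ ·) = gaussPi ι σ2 := by
  have h := map_withDensity_mulVec_add (isUnit_det_msqrt hR).ne_zero 0
    (continuous_gaussDens (ι := ι) σ2).measurable.ennreal_ofReal
  simpa only [add_zero, ← ENNReal.ofReal_mul (abs_nonneg _), ← gaussCovDens_eq hR] using! h

lemma isDensityOf_gaussCovDens (hR : R.PosDef) (hσ2 : 0 < σ2) :
    IsDensityOf (gaussCovDens σ2 R) (gaussCov σ2 R) volume := by
  refine ⟨?_, fun x => ?_, rfl, ?_⟩
  · have hmulVec : Continuous fun x : ι → ℝ => msqrt R *ᵥ x :=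
      Continuous.matrix_mulVec continuous_const continuous_id
    rw [funext (gaussCovDens_eq hR)]
    exact (continuous_const.mul ((continuous_gaussDens σ2).comp hmulVec)).measurable
  · rw [gaussCovDens_eq hR]
    exact mul_nonneg (abs_nonneg _) (gaussDens_nonneg hσ2 _)
  · have := isProbabilityMeasure_gaussPi (ι := ι) hσ2
    rw [← gaussCov_map_msqrt_mulVec hR] at this
    exact Measure.isProbabilityMeasure_of_map (msqrt R *ᵥ ·)

end GaussCov

section ModelAveragingDensities

variable {Q : Matrix (Fin k₁ ⊕ Fin k₂) (Fin k₁ ⊕ Fin k₂) ℝ} {σ2 α : ℝ}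

lemma radialWeight_exp (hσ2 : 0 < σ2) (hα : 0 < α) (ξ : ℝ) :
    radialWeight (rexp (2 * α * k₂)) (σ2 / α) k₂ ξ =
      (1 + rexp (-(α / σ2) * ξ ^ 2 + 2 * α * k₂)) ^ k₂ *
        (1 + 2 * α / σ2 * ξ ^ 2 * (1 + rexp (α / σ2 * ξ ^ 2 - 2 * α * k₂))⁻¹)⁻¹ := by
  have hdecay : -ξ ^ 2 / (σ2 / α) = -(α / σ2) * ξ ^ 2 := by field_simp
  have hgrowth : ξ ^ 2 / (σ2 / α) = α / σ2 * ξ ^ 2 := by field_simp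
  have hcoef : 2 / (σ2 / α) = 2 * α / σ2 := by field_simp
  rw [radialWeight, hdecay, hgrowth, hcoef, ← Real.exp_add, ← Real.exp_neg, ← Real.exp_add,
    add_comm (2 * α * k₂), neg_add_eq_sub]

lemma canonicalDens_exp (hσ2 : 0 < σ2) (hα : 0 < α) (y : Fin k₁ → ℝ) (w m : Fin k₂ → ℝ) :
    let a := rexp (2 * α * k₂)
    let b := σ2 / α
    let ξ := gfun a b (enorm2 w)
    canonicalDens a b σ2 m (Sum.elim y w) =
      (2 * π * σ2) ^ (-((k₁ : ℝ) + k₂) / 2) * rexp (-enorm2 y ^ 2 / (2 * σ2)) *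
        (1 + rexp (-(α / σ2) * ξ ^ 2 + 2 * α * k₂)) ^ k₂ *
        (1 + 2 * α / σ2 * ξ ^ 2 * (1 + rexp (α / σ2 * ξ ^ 2 - 2 * α * k₂))⁻¹)⁻¹ *
        rexp (-enorm2 (gdir a b w - m) ^ 2 / (2 * σ2)) := by
  intro a b ξ
  rw [canonicalDens, Sum.elim_comp_inl, Sum.elim_comp_inr, Fintype.card_fin,
    radialWeight_exp hσ2 hα, gaussDens, gaussDens, Fintype.card_fin, Fintype.card_fin,
    rpow_neg_add_div_two (by positivity)]
  ring

lemma fInfty_eq_quadDens (hQ : Q.PosDef) (hσ2 : 0 < σ2) (hα : 0 < α) (γ : Fin k₂ → ℝ)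
    (t : Fin k₁ ⊕ Fin k₂ → ℝ) :
    fInfty Q σ2 α γ t = quadDens (rexp (2 * α * k₂)) (σ2 / α) σ2 Q γ t := by
  rw [← sqrt_det_mul_canonicalDens (Real.exp_pos _) (div_pos hσ2 hα) hσ2
      (transpose_msqrt_mul_msqrt (posDef_toBlocks₁₁ hQ).posSemidef)
      (transpose_msqrt_mul_msqrt (posDef_schur hQ).posSemidef),
    canonicalDens_exp hσ2 hα, mulVec_add _ (t ∘ Sum.inl), mulVec_mulVec,
    msqrt_mul_regCoef (posDef_toBlocks₁₁ hQ)]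
  simp only [fInfty, schur]
  ring

lemma standardize_sumElim (hQ : Q.PosDef) (γ : Fin k₂ → ℝ) (y : Fin k₁ → ℝ) (w : Fin k₂ → ℝ) :
    standardize Q γ (Sum.elim
      ((msqrt Q.toBlocks₁₁)⁻¹ *ᵥ y - regCoef Q *ᵥ ((msqrt (schur Q))⁻¹ *ᵥ w - γ))
      ((msqrt (schur Q))⁻¹ *ᵥ w - γ)) = Sum.elim y w := by
  rw [standardize_eq_sumElim, Sum.elim_comp_inl, Sum.elim_comp_inr, sub_add_cancel,
    sub_add_cancel, mulVec_mulVec, mulVec_mulVec,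
    mul_nonsing_inv _ (isUnit_det_msqrt (posDef_toBlocks₁₁ hQ)),
    mul_nonsing_inv _ (isUnit_det_msqrt (posDef_schur hQ)), one_mulVec, one_mulVec]

lemma limitLaw_eq_map (hQ : Q.PosDef) (γ : Fin k₂ → ℝ) :
    limitLaw Q σ2 α γ = ((gaussPi (Fin k₁) σ2).prod (gaussPi (Fin k₂) σ2)).map fun z =>
      let x := (msqrt (schur Q))⁻¹ *ᵥ
        shrink (rexp (2 * α * k₂)) (σ2 / α) (z.2 + msqrt (schur Q) *ᵥ γ) - γ
      Sum.elim ((msqrt Q.toBlocks₁₁)⁻¹ *ᵥ z.1 - regCoef Q *ᵥ x) x := by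
  have hexponent (r : ℝ) : -r ^ 2 / (σ2 / α) = -α * r ^ 2 / σ2 := by
    rw [div_div_eq_mul_div]
    ring
  rw [limitLaw]
  congr with z : 1
  change fromRows (regCoef Q) (-1) *ᵥ γ + _ +
    (1 + _ * rexp (-α * enorm2 (z.2 + msqrt (schur Q) *ᵥ γ) ^ 2 / σ2))⁻¹ •
      (fromRows (-(regCoef Q * (msqrt (schur Q))⁻¹)) (msqrt (schur Q))⁻¹ *ᵥ z.2 -
        fromRows (regCoef Q) (-1) *ᵥ γ) = _
  simp only [shrink, hexponent, fromRows_mulVec, mulVec_smul, mulVec_add, mulVec_sub,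
    mulVec_mulVec, nonsing_inv_mul _ (isUnit_det_msqrt (posDef_schur hQ)), one_mulVec,
    neg_mulVec, zero_mulVec]
  ext (i | i)
  · simp only [Pi.add_apply, Pi.smul_apply, Pi.sub_apply, Sum.elim_inl, Pi.neg_apply, smul_eq_mul]
    ring
  · simp only [Pi.add_apply, Pi.smul_apply, Pi.sub_apply, Sum.elim_inr, Pi.neg_apply, smul_eq_mul,
      Pi.zero_apply]
    ring

lemma limitLaw_map_standardize (hQ : Q.PosDef) (γ : Fin k₂ → ℝ) :
    (limitLaw Q σ2 α γ).map (standardize Q γ) =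
      canonicalLaw (rexp (2 * α * k₂)) (σ2 / α) σ2 (msqrt (schur Q) *ᵥ γ) := by
  have hmulVec {κ κ' : Type} [Fintype κ] [Fintype κ'] (M : Matrix κ κ' ℝ) :
      Measurable (M *ᵥ ·) :=
    (Continuous.matrix_mulVec continuous_const continuous_id).measurable
  have hshrink : Measurable (shrink (rexp (2 * α * k₂)) (σ2 / α) : (Fin k₂ → ℝ) → _) :=
    (continuous_shrink (Real.exp_pos _)).measurable
  have hstd : Measurable (standardize Q γ) := (hmulVec _).add_const _
  rw [limitLaw_eq_map hQ, Measure.map_map hstd (by fun_prop), canonicalLaw]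
  congr with z : 1
  exact standardize_sumElim hQ γ _ _

lemma isDensityOf_fInfty (hQ : Q.PosDef) (hσ2 : 0 < σ2) (hα : 0 < α) (γ : Fin k₂ → ℝ) :
    IsDensityOf (fInfty Q σ2 α γ) (limitLaw Q σ2 α γ) volume := by
  rw [funext (fInfty_eq_quadDens hQ hσ2 hα γ)]
  exact isDensityOf_quadDens hQ (Real.exp_pos _) (div_pos hσ2 hα) hσ2
    (limitLaw_map_standardize hQ γ)

end ModelAveragingDensities

section LeastSquares

variable {X : Matrix (Fin n) (Fin k₁ ⊕ Fin k₂) ℝ} {α σ2 : ℝ}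

lemma posDef_gram (hX : X.rank = k₁ + k₂) : (Xᵀ * X).PosDef := by
  have hindep : LinearIndependent ℝ X.col := by
    rw [linearIndependent_iff_card_eq_finrank_span, Set.finrank, ← rank_eq_finrank_span_cols, hX,
      Fintype.card_sum, Fintype.card_fin, Fintype.card_fin]
  simpa only [conjTranspose_eq_transpose_of_trivial] using
    PosDef.conjTranspose_mul_self X (mulVec_injective_iff.2 hindep)

lemma isUnit_det_gram_X1 (hG : (Xᵀ * X).PosDef) : IsUnit ((X1 X)ᵀ * X1 X).det :=
  (posDef_toBlocks₁₁ hG).det_pos.ne'.isUnit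

lemma regCoef_gram (X : Matrix (Fin n) (Fin k₁ ⊕ Fin k₂) ℝ) :
    regCoef (Xᵀ * X) = ((X1 X)ᵀ * X1 X)⁻¹ * ((X1 X)ᵀ * X2 X) :=
  rfl

lemma schur_gram (X : Matrix (Fin n) (Fin k₁ ⊕ Fin k₂) ℝ) :
    schur (Xᵀ * X) = (X2 X)ᵀ * (1 - projR X) * X2 X := by
  change (X2 X)ᵀ * X2 X - (X2 X)ᵀ * X1 X * ((X1 X)ᵀ * X1 X)⁻¹ * ((X1 X)ᵀ * X2 X) = _
  simp only [projR, Matrix.mul_sub, Matrix.sub_mul, Matrix.mul_one, Matrix.mul_assoc]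

lemma transpose_projR (X : Matrix (Fin n) (Fin k₁ ⊕ Fin k₂) ℝ) : (projR X)ᵀ = projR X := by
  simp only [projR, transpose_mul, transpose_transpose, transpose_nonsing_inv, Matrix.mul_assoc]

lemma one_sub_projR_mul_X1 (hG : (Xᵀ * X).PosDef) : (1 - projR X) * X1 X = 0 := by
  rw [projR, Matrix.sub_mul, Matrix.one_mul, Matrix.mul_assoc, Matrix.mul_assoc,
    nonsing_inv_mul _ (isUnit_det_gram_X1 hG), Matrix.mul_one, sub_self]

lemma transpose_X1_mul_one_sub_projR (hG : (Xᵀ * X).PosDef) : (X1 X)ᵀ * (1 - projR X) = 0 := by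
  have h := congrArg transpose (one_sub_projR_mul_X1 hG)
  rwa [transpose_mul, transpose_sub, transpose_projR, transpose_one, transpose_zero] at h

lemma one_sub_projR_mul_self (hG : (Xᵀ * X).PosDef) :
    (1 - projR X) * (1 - projR X) = 1 - projR X := by
  have h : (1 - projR X) * projR X = 0 := by
    nth_rw 2 [projR]
    rw [← Matrix.mul_assoc, ← Matrix.mul_assoc, one_sub_projR_mul_X1 hG, Matrix.zero_mul,
      Matrix.zero_mul]
  rw [Matrix.mul_sub, Matrix.mul_one, h, sub_zero]

lemma mulVec_eq_X1_add_X2 (X : Matrix (Fin n) (Fin k₁ ⊕ Fin k₂) ℝ) (t : Fin k₁ ⊕ Fin k₂ → ℝ) :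
    X *ᵥ t = X1 X *ᵥ (t ∘ Sum.inl) + X2 X *ᵥ (t ∘ Sum.inr) := by
  conv_lhs => rw [← fromCols_toCols X, fromCols_mulVec]
  rfl

lemma one_sub_projR_mulVec (hG : (Xᵀ * X).PosDef) (t : Fin k₁ ⊕ Fin k₂ → ℝ) :
    (1 - projR X) *ᵥ (X *ᵥ t) = (1 - projR X) *ᵥ (X2 X *ᵥ (t ∘ Sum.inr)) := by
  rw [mulVec_eq_X1_add_X2, mulVec_add, mulVec_mulVec, one_sub_projR_mul_X1 hG, zero_mulVec,
    zero_add]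

lemma gram_mulVec_betaU (hG : (Xᵀ * X).PosDef) (Y : Fin n → ℝ) :
    (Xᵀ * X) *ᵥ betaU X Y = Xᵀ *ᵥ Y := by
  rw [betaU, mulVec_mulVec, mul_nonsing_inv _ hG.det_pos.ne'.isUnit, one_mulVec]

lemma betaU_mulVec_add (hG : (Xᵀ * X).PosDef) (β : Fin k₁ ⊕ Fin k₂ → ℝ) (u : Fin n → ℝ) :
    betaU X (X *ᵥ β + u) = β + betaU X u := by
  rw [betaU, mulVec_add, mulVec_add, mulVec_mulVec, mulVec_mulVec, Matrix.mul_assoc,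
    nonsing_inv_mul _ hG.det_pos.ne'.isUnit, one_mulVec, betaU]

lemma transpose_X1_mulVec (X : Matrix (Fin n) (Fin k₁ ⊕ Fin k₂) ℝ) (Y : Fin n → ℝ) :
    (X1 X)ᵀ *ᵥ Y = (Xᵀ *ᵥ Y) ∘ Sum.inl :=
  rfl

lemma betaU_inl_add_regCoef_mulVec (hG : (Xᵀ * X).PosDef) (Y : Fin n → ℝ) :
    betaU X Y ∘ Sum.inl + regCoef (Xᵀ * X) *ᵥ (betaU X Y ∘ Sum.inr) =
      ((X1 X)ᵀ * X1 X)⁻¹ *ᵥ ((X1 X)ᵀ *ᵥ Y) := by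
  rw [transpose_X1_mulVec, ← gram_mulVec_betaU hG, ← mulVec_mulVec, ← transpose_X1_mulVec,
    mulVec_eq_X1_add_X2, mulVec_add, mulVec_add, regCoef_gram]
  simp only [mulVec_mulVec, nonsing_inv_mul _ (isUnit_det_gram_X1 hG), one_mulVec]

-- The Frisch–Waugh–Lovell theorem.
lemma betaU_inr (hG : (Xᵀ * X).PosDef) (Y : Fin n → ℝ) :
    betaU X Y ∘ Sum.inr = (schur (Xᵀ * X))⁻¹ *ᵥ ((X2 X)ᵀ * (1 - projR X)) *ᵥ Y := by
  have hnormal : Xᵀ *ᵥ (Y - X *ᵥ betaU X Y) = 0 := by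
    rw [mulVec_sub, mulVec_mulVec, gram_mulVec_betaU hG, sub_self]
  have hX1 : (X1 X)ᵀ *ᵥ (Y - X *ᵥ betaU X Y) = 0 := by rw [transpose_X1_mulVec, hnormal]; rfl
  have hX2 : (X2 X)ᵀ *ᵥ (Y - X *ᵥ betaU X Y) = 0 := funext fun i => congrFun hnormal (Sum.inr i)
  have hresid : ((X2 X)ᵀ * (1 - projR X)) *ᵥ (Y - X *ᵥ betaU X Y) = 0 := by
    rw [← mulVec_mulVec, sub_mulVec, one_mulVec, projR, ← mulVec_mulVec, hX1, mulVec_zero,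
      sub_zero, hX2]
  have hfit : ((X2 X)ᵀ * (1 - projR X)) *ᵥ Y = schur (Xᵀ * X) *ᵥ (betaU X Y ∘ Sum.inr) := by
    rw [mulVec_sub, sub_eq_zero, ← mulVec_mulVec, ← mulVec_mulVec,
      one_sub_projR_mulVec hG] at hresid
    rw [← mulVec_mulVec, hresid, schur_gram, mulVec_mulVec, mulVec_mulVec, Matrix.mul_assoc]
  rw [hfit, mulVec_mulVec, nonsing_inv_mul _ (posDef_schur hG).det_pos.ne'.isUnit, one_mulVec]

lemma rR_sub_rU (hG : (Xᵀ * X).PosDef) (σ2 : ℝ) (Y : Fin n → ℝ) :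
    rR X σ2 Y - rU X σ2 Y =
      enorm2 (msqrt (schur (Xᵀ * X)) *ᵥ (betaU X Y ∘ Sum.inr)) ^ 2 - 2 * σ2 * k₂ := by
  have hzero : (fun _ : Fin k₂ => (0 : ℝ)) = 0 := rfl
  rw [enorm2_mulVec_sq, transpose_msqrt_mul_msqrt (posDef_schur hG).posSemidef, rR, rU,
    dotProduct_mulVec_eq_add_schur hG, dotProduct_mulVec_eq_add_schur hG (betaU X Y),
    betaU_inl_add_regCoef_mulVec hG, betaR, Sum.elim_comp_inl, Sum.elim_comp_inr, hzero,
    mulVec_zero, mulVec_zero, dotProduct_zero, add_zero, add_zero]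
  ring

lemma one_sub_lamHat (hG : (Xᵀ * X).PosDef) (hσ2 : 0 < σ2) (α : ℝ) (Y : Fin n → ℝ) :
    1 - lamHat α σ2 X Y = (1 + rexp (2 * α * k₂) *
      rexp (-enorm2 (msqrt (schur (Xᵀ * X)) *ᵥ (betaU X Y ∘ Sum.inr)) ^ 2 / (σ2 / α)))⁻¹ := by
  have hratio : rexp (-(α * rR X σ2 Y) / σ2) = rexp (-(α * rU X σ2 Y) / σ2) *
      (rexp (2 * α * k₂) *
        rexp (-enorm2 (msqrt (schur (Xᵀ * X)) *ᵥ (betaU X Y ∘ Sum.inr)) ^ 2 / (σ2 / α))) := by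
    rw [← Real.exp_add, ← Real.exp_add, eq_add_of_sub_eq (rR_sub_rU hG σ2 Y), div_div_eq_mul_div]
    congr 1
    field_simp
    ring
  rw [lamHat, hratio]
  field_simp
  ring

lemma mavg_inr (X : Matrix (Fin n) (Fin k₁ ⊕ Fin k₂) ℝ) (α σ2 : ℝ) (Y : Fin n → ℝ) :
    mavg α σ2 X Y ∘ Sum.inr = (1 - lamHat α σ2 X Y) • (betaU X Y ∘ Sum.inr) := by
  ext i
  simp [mavg, betaR]

lemma msqrt_schur_mulVec_mavg_inr (hG : (Xᵀ * X).PosDef) (hσ2 : 0 < σ2) (α : ℝ) (Y : Fin n → ℝ) :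
    msqrt (schur (Xᵀ * X)) *ᵥ (mavg α σ2 X Y ∘ Sum.inr) =
      shrink (rexp (2 * α * k₂)) (σ2 / α)
        (msqrt (schur (Xᵀ * X)) *ᵥ (betaU X Y ∘ Sum.inr)) := by
  rw [mavg_inr, one_sub_lamHat hG hσ2, mulVec_smul, shrink]

lemma mavg_inl_add_regCoef_mulVec (hG : (Xᵀ * X).PosDef) (α σ2 : ℝ) (Y : Fin n → ℝ) :
    mavg α σ2 X Y ∘ Sum.inl + regCoef (Xᵀ * X) *ᵥ (mavg α σ2 X Y ∘ Sum.inr) =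
      ((X1 X)ᵀ * X1 X)⁻¹ *ᵥ ((X1 X)ᵀ *ᵥ Y) := by
  have hinl : mavg α σ2 X Y ∘ Sum.inl =
      lamHat α σ2 X Y • (((X1 X)ᵀ * X1 X)⁻¹ *ᵥ ((X1 X)ᵀ *ᵥ Y)) +
        (1 - lamHat α σ2 X Y) • (betaU X Y ∘ Sum.inl) := rfl
  rw [hinl, mavg_inr, mulVec_smul, ← betaU_inl_add_regCoef_mulVec hG]
  module

lemma inv_gram_X1_mulVec_mulVec (hG : (Xᵀ * X).PosDef) (β : Fin k₁ ⊕ Fin k₂ → ℝ) :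
    ((X1 X)ᵀ * X1 X)⁻¹ *ᵥ ((X1 X)ᵀ *ᵥ (X *ᵥ β)) =
      β ∘ Sum.inl + regCoef (Xᵀ * X) *ᵥ (β ∘ Sum.inr) := by
  rw [mulVec_eq_X1_add_X2, mulVec_add, mulVec_add, regCoef_gram]
  simp only [mulVec_mulVec, nonsing_inv_mul _ (isUnit_det_gram_X1 hG), one_mulVec]

lemma mavg_sub_inl_add_regCoef_mulVec (hG : (Xᵀ * X).PosDef) (α σ2 : ℝ)
    (β : Fin k₁ ⊕ Fin k₂ → ℝ) (u : Fin n → ℝ) :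
    let d := mavg α σ2 X (X *ᵥ β + u) - β
    d ∘ Sum.inl + regCoef (Xᵀ * X) *ᵥ (d ∘ Sum.inr) =
      ((X1 X)ᵀ * X1 X)⁻¹ *ᵥ ((X1 X)ᵀ *ᵥ u) := by
  set m := mavg α σ2 X (X *ᵥ β + u) with hm
  calc (m - β) ∘ Sum.inl + regCoef (Xᵀ * X) *ᵥ ((m - β) ∘ Sum.inr)
      = (m ∘ Sum.inl + regCoef (Xᵀ * X) *ᵥ (m ∘ Sum.inr)) -
          (β ∘ Sum.inl + regCoef (Xᵀ * X) *ᵥ (β ∘ Sum.inr)) := by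
        rw [add_sub_add_comm, ← mulVec_sub]
        rfl
    _ = ((X1 X)ᵀ * X1 X)⁻¹ *ᵥ ((X1 X)ᵀ *ᵥ u) := by
        rw [hm, mavg_inl_add_regCoef_mulVec hG, mulVec_add, mulVec_add,
          inv_gram_X1_mulVec_mulVec hG, add_sub_cancel_left]

lemma msqrt_schur_mulVec_betaU_inr (hG : (Xᵀ * X).PosDef) (β : Fin k₁ ⊕ Fin k₂ → ℝ)
    (u : Fin n → ℝ) :
    msqrt (schur (Xᵀ * X)) *ᵥ (betaU X (X *ᵥ β + u) ∘ Sum.inr) =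
      ((msqrt (schur (Xᵀ * X)))⁻¹ * ((X2 X)ᵀ * (1 - projR X))) *ᵥ u +
        msqrt (schur (Xᵀ * X)) *ᵥ (β ∘ Sum.inr) := by
  have hinr : (β + betaU X u) ∘ Sum.inr = betaU X u ∘ Sum.inr + β ∘ Sum.inr := add_comm _ _
  rw [betaU_mulVec_add hG, hinr, mulVec_add, betaU_inr hG, mulVec_mulVec,
    msqrt_mul_inv (posDef_schur hG), mulVec_mulVec]

lemma standardize_mavg_sub (hG : (Xᵀ * X).PosDef) (hσ2 : 0 < σ2) (α : ℝ)
    (β : Fin k₁ ⊕ Fin k₂ → ℝ) (u : Fin n → ℝ) :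
    standardize (Xᵀ * X) (β ∘ Sum.inr) (mavg α σ2 X (X *ᵥ β + u) - β) =
      Sum.elim (((msqrt (Xᵀ * X).toBlocks₁₁)⁻¹ * (X1 X)ᵀ) *ᵥ u)
        (shrink (rexp (2 * α * k₂)) (σ2 / α)
          (((msqrt (schur (Xᵀ * X)))⁻¹ * ((X2 X)ᵀ * (1 - projR X))) *ᵥ u +
            msqrt (schur (Xᵀ * X)) *ᵥ (β ∘ Sum.inr))) := by
  have hinr : (mavg α σ2 X (X *ᵥ β + u) - β) ∘ Sum.inr + β ∘ Sum.inr =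
      mavg α σ2 X (X *ᵥ β + u) ∘ Sum.inr :=
    funext fun i => sub_add_cancel _ _
  rw [standardize_eq_sumElim, mavg_sub_inl_add_regCoef_mulVec hG, hinr,
    msqrt_schur_mulVec_mavg_inr hG hσ2, msqrt_schur_mulVec_betaU_inr hG,
    ← msqrt_mul_inv (posDef_toBlocks₁₁ hG), mulVec_mulVec, mulVec_mulVec]
  rfl

lemma measurable_mavg (X : Matrix (Fin n) (Fin k₁ ⊕ Fin k₂) ℝ) (α σ2 : ℝ) :
    Measurable (mavg α σ2 X) := by
  have hbetaU : Continuous (betaU X) := by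
    unfold betaU
    fun_prop
  have hbetaR : Continuous (betaR X) := by
    have hinl : Continuous fun Y : Fin n → ℝ => ((X1 X)ᵀ * X1 X)⁻¹ *ᵥ ((X1 X)ᵀ *ᵥ Y) := by fun_prop
    exact continuous_pi (Sum.rec (fun i => (continuous_apply i).comp hinl)
      fun _ => continuous_const)
  unfold mavg lamHat rR rU
  fun_prop

lemma mavg_sub_map_standardize (hG : (Xᵀ * X).PosDef) (hσ2 : 0 < σ2) (α : ℝ)
    (β : Fin k₁ ⊕ Fin k₂ → ℝ) :
    ((Pmeas X β σ2).map fun Y => mavg α σ2 X Y - β).map (standardize (Xᵀ * X) (β ∘ Sum.inr)) =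
      canonicalLaw (rexp (2 * α * k₂)) (σ2 / α) σ2
        (msqrt (schur (Xᵀ * X)) *ᵥ (β ∘ Sum.inr)) := by
  have hW₂ : (X2 X)ᵀ * (1 - projR X) * ((X2 X)ᵀ * (1 - projR X))ᵀ = schur (Xᵀ * X) := by
    rw [transpose_mul, transpose_sub, transpose_one, transpose_projR, transpose_transpose,
      ← Matrix.mul_assoc, Matrix.mul_assoc _ (1 - projR X) (1 - projR X),
      one_sub_projR_mul_self hG, schur_gram]
  have horth : (msqrt (Xᵀ * X).toBlocks₁₁)⁻¹ * (X1 X)ᵀ *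
      ((msqrt (schur (Xᵀ * X)))⁻¹ * ((X2 X)ᵀ * (1 - projR X)))ᵀ = 0 := by
    rw [transpose_mul, transpose_mul, transpose_sub, transpose_one, transpose_projR,
      Matrix.mul_assoc, ← Matrix.mul_assoc (X1 X)ᵀ, ← Matrix.mul_assoc (X1 X)ᵀ,
      transpose_X1_mul_one_sub_projR hG, Matrix.zero_mul, Matrix.zero_mul, Matrix.mul_zero]
  have hwhite := gaussPi_map_mulVec_prodMk
    (whiten_mul_transpose_self (posDef_toBlocks₁₁ hG) (W := (X1 X)ᵀ) rfl)
    (whiten_mul_transpose_self (posDef_schur hG) hW₂) horth hσ2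
  have hmulVec {κ κ' : Type} [Fintype κ] [Fintype κ'] (M : Matrix κ κ' ℝ) :
      Measurable (M *ᵥ ·) :=
    (Continuous.matrix_mulVec continuous_const continuous_id).measurable
  have hshrink : Measurable (shrink (rexp (2 * α * k₂)) (σ2 / α) : (Fin k₂ → ℝ) → _) :=
    (continuous_shrink (Real.exp_pos _)).measurable
  have hstd : Measurable (standardize (Xᵀ * X) (β ∘ Sum.inr)) := (hmulVec _).add_const _
  have hmavg := measurable_mavg X α σ2
  rw [canonicalLaw, ← hwhite, Pmeas, Measure.map_map (by fun_prop) (by fun_prop),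
    Measure.map_map (by fun_prop) (by fun_prop), Measure.map_map (by fun_prop) (by fun_prop)]
  exact congrArg (Measure.map · _) (funext (standardize_mavg_sub hG hσ2 α β))

end LeastSquares

section Rescaling

variable {X : Matrix (Fin n) (Fin k₁ ⊕ Fin k₂) ℝ} {α σ2 c : ℝ}

lemma gram_smul {m ι : Type*} [Fintype m] (c : ℝ) (A : Matrix m ι ℝ) :
    (c • A)ᵀ * (c • A) = c ^ 2 • (Aᵀ * A) := by
  rw [transpose_smul, smul_mul, Matrix.mul_smul, smul_smul, sq]

lemma gram_inv_mulVec_smul {ι : Type*} [Fintype ι] [DecidableEq ι] {A : Matrix (Fin n) ι ℝ}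
    (hA : IsUnit (Aᵀ * A).det) (hc : c ≠ 0) (Y : Fin n → ℝ) :
    ((c • A)ᵀ * (c • A))⁻¹ *ᵥ ((c • A)ᵀ *ᵥ Y) = c⁻¹ • ((Aᵀ * A)⁻¹ *ᵥ (Aᵀ *ᵥ Y)) := by
  have hinv : (c ^ 2 • (Aᵀ * A))⁻¹ = (c ^ 2)⁻¹ • (Aᵀ * A)⁻¹ :=
    inv_smul' _ (Units.mk0 (c ^ 2) (pow_ne_zero 2 hc)) hA
  rw [gram_smul, hinv, transpose_smul, smul_mulVec, smul_mulVec, mulVec_smul, smul_smul]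
  congr 1
  field_simp

lemma betaU_smul (hG : (Xᵀ * X).PosDef) (hc : c ≠ 0) (Y : Fin n → ℝ) :
    betaU (c • X) Y = c⁻¹ • betaU X Y :=
  gram_inv_mulVec_smul hG.det_pos.ne'.isUnit hc Y

lemma betaR_smul (hG : (Xᵀ * X).PosDef) (hc : c ≠ 0) (Y : Fin n → ℝ) :
    betaR (c • X) Y = c⁻¹ • betaR X Y := by
  have h := gram_inv_mulVec_smul (isUnit_det_gram_X1 hG) hc Y
  ext (i | _)
  · exact congrFun h i
  · exact (mul_zero c⁻¹).symm

lemma lamHat_smul (hG : (Xᵀ * X).PosDef) (hc : c ≠ 0) (α σ2 : ℝ) (Y : Fin n → ℝ) :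
    lamHat α σ2 (c • X) Y = lamHat α σ2 X Y := by
  have hquad (b : Fin k₁ ⊕ Fin k₂ → ℝ) :
      (c⁻¹ • b) ⬝ᵥ ((c • X)ᵀ * (c • X)) *ᵥ (c⁻¹ • b) = b ⬝ᵥ (Xᵀ * X) *ᵥ b := by
    rw [gram_smul, smul_mulVec, mulVec_smul, dotProduct_smul, dotProduct_smul, smul_dotProduct,
      smul_eq_mul, smul_eq_mul, smul_eq_mul]
    field_simp
  rw [lamHat, lamHat, rR, rR, rU, rU, betaU_smul hG hc, betaR_smul hG hc, hquad, hquad]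

lemma mavg_smul (hG : (Xᵀ * X).PosDef) (hc : c ≠ 0) (α σ2 : ℝ) (Y : Fin n → ℝ) :
    mavg α σ2 (c • X) Y = c⁻¹ • mavg α σ2 X Y := by
  rw [mavg, mavg, lamHat_smul hG hc, betaU_smul hG hc, betaR_smul hG hc]
  module

lemma Pmeas_smul (X : Matrix (Fin n) (Fin k₁ ⊕ Fin k₂) ℝ) (hc : c ≠ 0)
    (β : Fin k₁ ⊕ Fin k₂ → ℝ) (σ2 : ℝ) : Pmeas (c • X) (c⁻¹ • β) σ2 = Pmeas X β σ2 := by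
  rw [Pmeas, Pmeas, smul_mulVec, mulVec_smul, smul_smul, mul_inv_cancel₀ hc, one_smul]

lemma isDensityOf_smul_mavg_sub (hG : (Xᵀ * X).PosDef) (hσ2 : 0 < σ2) (hα : 0 < α) (hc : 0 < c)
    (β : Fin k₁ ⊕ Fin k₂ → ℝ) :
    IsDensityOf
      (quadDens (rexp (2 * α * k₂)) (σ2 / α) σ2 ((c ^ 2)⁻¹ • (Xᵀ * X)) (c • (β ∘ Sum.inr)))
      ((Pmeas X β σ2).map fun Y => c • (mavg α σ2 X Y - β)) volume := by
  have hgram : (c⁻¹ • X)ᵀ * (c⁻¹ • X) = (c ^ 2)⁻¹ • (Xᵀ * X) := by rw [gram_smul, inv_pow]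
  have hpos : ((c⁻¹ • X)ᵀ * (c⁻¹ • X)).PosDef := hgram ▸ hG.smul (by positivity)
  have hlaw := mavg_sub_map_standardize hpos hσ2 α (c • β)
  have hP := Pmeas_smul X (inv_ne_zero hc.ne') β σ2
  rw [inv_inv] at hP
  have hmavg (Y : Fin n → ℝ) : mavg α σ2 (c⁻¹ • X) Y - c • β = c • (mavg α σ2 X Y - β) := by
    rw [mavg_smul hG (inv_ne_zero hc.ne'), inv_inv, smul_sub]
  simp only [hP, hmavg] at hlaw
  rw [← hgram]
  exact isDensityOf_quadDens hpos (Real.exp_pos _) (div_pos hσ2 hα) hσ2 hlaw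

lemma fdens_eq_quadDens (hG : (Xᵀ * X).PosDef) (hn : 0 < n) (hσ2 : 0 < σ2) (hα : 0 < α)
    (β : Fin k₁ ⊕ Fin k₂ → ℝ) (t : Fin k₁ ⊕ Fin k₂ → ℝ) :
    fdens X β σ2 α t = quadDens (rexp (2 * α * k₂)) (σ2 / α) σ2 ((n : ℝ)⁻¹ • (Xᵀ * X))
      (√n • (β ∘ Sum.inr)) t := by
  have hsqrt : 0 < √(n : ℝ) := Real.sqrt_pos.2 (by exact_mod_cast hn)
  have hinv : (√(n : ℝ))⁻¹ * (√(n : ℝ))⁻¹ = (n : ℝ)⁻¹ := by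
    rw [← mul_inv, Real.mul_self_sqrt (Nat.cast_nonneg n)]
  have hn₀ : (n : ℝ)⁻¹ ≠ 0 := by positivity
  have hroot {ι : Type} [Fintype ι] [DecidableEq ι] {A : Matrix ι ι ℝ} (hA : A.PosDef) :
      ((√(n : ℝ))⁻¹ • msqrt A)ᵀ * ((√(n : ℝ))⁻¹ • msqrt A) = (n : ℝ)⁻¹ • A := by
    rw [transpose_smul, smul_mul, Matrix.mul_smul, smul_smul, hinv,
      transpose_msqrt_mul_msqrt hA.posSemidef]
  rw [← sqrt_det_mul_canonicalDens (Real.exp_pos _) (div_pos hσ2 hα) hσ2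
      (hroot (posDef_toBlocks₁₁ hG))
      ((hroot (posDef_schur hG)).trans (schur_smul hn₀ (posDef_toBlocks₁₁ hG)).symm),
    canonicalDens_exp hσ2 hα, regCoef_smul hn₀ (posDef_toBlocks₁₁ hG), smul_mulVec, smul_mulVec,
    smul_mulVec, mulVec_smul _ _ (β ∘ Sum.inr), inv_smul_smul₀ hsqrt.ne',
    mulVec_add _ (t ∘ Sum.inl), mulVec_mulVec, msqrt_mul_regCoef (posDef_toBlocks₁₁ hG), schur_gram]
  have h₁₁ : (Xᵀ * X).toBlocks₁₁ = (X1 X)ᵀ * X1 X := rfl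
  have h₁₂ : (Xᵀ * X).toBlocks₁₂ = (X1 X)ᵀ * X2 X := rfl
  simp only [fdens, h₁₁, h₁₂, Matrix.mul_assoc]
  ring

lemma isDensityOf_fdens (hG : (Xᵀ * X).PosDef) (hn : 0 < n) (hσ2 : 0 < σ2) (hα : 0 < α)
    (β : Fin k₁ ⊕ Fin k₂ → ℝ) :
    IsDensityOf (fdens X β σ2 α)
      ((Pmeas X β σ2).map fun Y => √n • (mavg α σ2 X Y - β)) volume := by
  have h := isDensityOf_smul_mavg_sub hG hσ2 hα (Real.sqrt_pos.2 (Nat.cast_pos.2 hn)) β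
  rwa [Real.sq_sqrt (Nat.cast_nonneg n), ← funext (fdens_eq_quadDens hG hn hσ2 hα β)] at h

end Rescaling

section MatrixLimits

variable {ι κ T : Type*} [Fintype ι] {l : Filter T}

lemma tendsto_mulVec {A : T → Matrix κ ι ℝ} {A₀ : Matrix κ ι ℝ} {v : T → ι → ℝ} {v₀ : ι → ℝ}
    (hA : Tendsto A l (𝓝 A₀)) (hv : Tendsto v l (𝓝 v₀)) :
    Tendsto (fun i => A i *ᵥ v i) l (𝓝 (A₀ *ᵥ v₀)) :=
  ((Continuous.matrix_mulVec continuous_fst continuous_snd).tendsto (A₀, v₀)).comp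
    (hA.prodMk_nhds hv)

lemma tendsto_dotProduct_mulVec {A : T → Matrix ι ι ℝ} {A₀ : Matrix ι ι ℝ} {v : T → ι → ℝ}
    {v₀ : ι → ℝ} (hA : Tendsto A l (𝓝 A₀)) (hv : Tendsto v l (𝓝 v₀)) :
    Tendsto (fun i => v i ⬝ᵥ A i *ᵥ v i) l (𝓝 (v₀ ⬝ᵥ A₀ *ᵥ v₀)) :=
  ((Continuous.dotProduct continuous_fst continuous_snd).tendsto (v₀, A₀ *ᵥ v₀)).comp
    (hv.prodMk_nhds (tendsto_mulVec hA hv))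

variable [DecidableEq ι]

lemma continuousAt_inv_of_posDef {R : Matrix ι ι ℝ} (hR : R.PosDef) :
    ContinuousAt (Inv.inv : Matrix ι ι ℝ → Matrix ι ι ℝ) R :=
  continuousAt_matrix_inv R (by simpa using continuousAt_inv₀ hR.det_pos.ne')

variable {Q : Matrix (ι ⊕ κ) (ι ⊕ κ) ℝ}

lemma continuousAt_regCoef (hQ : Q.PosDef) : ContinuousAt regCoef Q := by
  have hinv : ContinuousAt (fun Q : Matrix (ι ⊕ κ) (ι ⊕ κ) ℝ => Q.toBlocks₁₁⁻¹) Q :=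
    (continuousAt_inv_of_posDef (posDef_toBlocks₁₁ hQ)).comp
      (continuous_id.matrix_submatrix Sum.inl Sum.inl).continuousAt
  have h₁₂ : ContinuousAt (fun Q : Matrix (ι ⊕ κ) (ι ⊕ κ) ℝ => Q.toBlocks₁₂) Q :=
    (continuous_id.matrix_submatrix Sum.inl Sum.inr).continuousAt
  exact ((continuous_fst.matrix_mul continuous_snd).continuousAt).comp₂ hinv h₁₂

lemma continuousAt_schur (hQ : Q.PosDef) : ContinuousAt schur Q := by
  have h₂₁ : ContinuousAt (fun Q : Matrix (ι ⊕ κ) (ι ⊕ κ) ℝ => Q.toBlocks₂₁) Q :=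
    (continuous_id.matrix_submatrix Sum.inr Sum.inl).continuousAt
  have h₂₂ : ContinuousAt (fun Q : Matrix (ι ⊕ κ) (ι ⊕ κ) ℝ => Q.toBlocks₂₂) Q :=
    (continuous_id.matrix_submatrix Sum.inr Sum.inr).continuousAt
  rw [funext schur_eq_sub_mul_regCoef]
  exact h₂₂.sub (((continuous_fst.matrix_mul continuous_snd).continuousAt).comp₂ h₂₁
    (continuousAt_regCoef hQ))

lemma sq_apply_le_inv_mul_dotProduct_mulVec {R : Matrix ι ι ℝ} (hR : R.PosDef) (x : ι → ℝ)
    (i : ι) : x i ^ 2 ≤ R⁻¹ i i * (x ⬝ᵥ R *ᵥ x) := by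
  have hx : (msqrt R)⁻¹ *ᵥ (msqrt R *ᵥ x) = x := by
    rw [mulVec_mulVec, nonsing_inv_mul _ (isUnit_det_msqrt hR), one_mulVec]
  have hdiag : ∑ j, (msqrt R)⁻¹ i j ^ 2 = R⁻¹ i i := by
    have hsymm : ((msqrt R)⁻¹)ᵀ = (msqrt R)⁻¹ := by
      rw [transpose_nonsing_inv, transpose_msqrt hR.posSemidef]
    rw [← inv_msqrt_mul_inv_msqrt hR.posSemidef, mul_apply]
    exact Finset.sum_congr rfl fun j _ => by
      rw [sq, ← transpose_apply (msqrt R)⁻¹ i j, hsymm]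
  calc x i ^ 2 = (∑ j, (msqrt R)⁻¹ i j * (msqrt R *ᵥ x) j) ^ 2 := by
        rw [← congrFun hx i, mulVec, dotProduct]
    _ ≤ (∑ j, (msqrt R)⁻¹ i j ^ 2) * ∑ j, (msqrt R *ᵥ x) j ^ 2 :=
        Finset.sum_mul_sq_le_sq_mul_sq _ _ _
    _ = R⁻¹ i i * (x ⬝ᵥ R *ᵥ x) := by
        rw [hdiag, ← enorm2_sq, enorm2_mulVec_sq, transpose_msqrt_mul_msqrt hR.posSemidef]

end MatrixLimits

section RadialLimits

variable {a b : ℝ}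

lemma tendsto_pow_mul_exp_neg_sq_div (hb : 0 < b) (d : ℕ) :
    Tendsto (fun ξ : ℝ => ξ ^ d * rexp (-ξ ^ 2 / b)) atTop (𝓝 0) := by
  have h := (tendsto_rpow_abs_mul_exp_neg_mul_sq_cocompact (inv_pos.2 hb) d).mono_left
    atTop_le_cocompact
  refine h.congr' ?_
  filter_upwards [eventually_ge_atTop 0] with ξ hξ
  rw [abs_of_nonneg hξ, Real.rpow_natCast, neg_mul, inv_mul_eq_div, neg_div]

lemma tendsto_radialWeight_atTop (ha : 0 < a) (hb : 0 < b) (d : ℕ) :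
    Tendsto (radialWeight a b d) atTop (𝓝 1) := by
  have hexp : Tendsto (fun ξ : ℝ => a * rexp (-ξ ^ 2 / b)) atTop (𝓝 0) := by
    simpa using (tendsto_pow_mul_exp_neg_sq_div hb 0).const_mul a
  have hcorr : Tendsto (fun ξ : ℝ => 2 / b * ξ ^ 2 * (1 + a⁻¹ * rexp (ξ ^ 2 / b))⁻¹) atTop
      (𝓝 0) := by
    have hbound := (tendsto_pow_mul_exp_neg_sq_div hb 2).const_mul (2 / b * a)
    rw [mul_zero] at hbound
    refine squeeze_zero (fun ξ => by positivity) (fun ξ => ?_) hbound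
    calc 2 / b * ξ ^ 2 * (1 + a⁻¹ * rexp (ξ ^ 2 / b))⁻¹
        ≤ 2 / b * ξ ^ 2 * (a⁻¹ * rexp (ξ ^ 2 / b))⁻¹ := by
          gcongr
          exact le_add_of_nonneg_left zero_le_one
      _ = 2 / b * a * (ξ ^ 2 * rexp (-ξ ^ 2 / b)) := by
          rw [mul_inv, inv_inv, ← Real.exp_neg, neg_div]
          ring
  simpa using! ((hexp.const_add 1).pow d).mul ((hcorr.const_add 1).inv₀ (by norm_num))

lemma tendsto_gfun_atTop (ha : 0 < a) (hb : 0 < b) : Tendsto (gfun a b) atTop atTop :=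
  tendsto_atTop_mono' _ ((eventually_ge_atTop 0).mono fun _ => le_gfun ha hb) tendsto_id

lemma tendsto_mul_stretch_sub_one (ha : 0 < a) (hb : 0 < b) :
    Tendsto (fun r => r * (stretch a b r - 1)) atTop (𝓝 0) := by
  have hg : Tendsto (fun r => a * (gfun a b r * rexp (-gfun a b r ^ 2 / b))) atTop (𝓝 0) := by
    simpa using ((tendsto_pow_mul_exp_neg_sq_div hb 1).comp (tendsto_gfun_atTop ha hb)).const_mul a
  refine squeeze_zero' ?_ ?_ hg
  · filter_upwards [eventually_ge_atTop 0] with r hr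
    exact mul_nonneg hr (sub_nonneg.2 (one_le_stretch ha r))
  · filter_upwards [eventually_ge_atTop 0] with r hr
    calc r * (stretch a b r - 1) ≤ gfun a b r * (stretch a b r - 1) := by
          gcongr
          · exact sub_nonneg.2 (one_le_stretch ha r)
          · exact le_gfun ha hb hr
      _ = a * (gfun a b r * rexp (-gfun a b r ^ 2 / b)) := by
          rw [stretch]
          ring

end RadialLimits

section DensityLimits

variable {ι κ T : Type*} [Fintype ι] [Fintype κ] {l : Filter T} {a b : ℝ}

lemma tendsto_enorm2_const_add_atTop {v : T → ι → ℝ} (hv : Tendsto (fun i => enorm2 (v i)) l atTop)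
    (t : ι → ℝ) : Tendsto (fun i => enorm2 (t + v i)) l atTop := by
  have hlower : Tendsto (fun i => enorm2 (v i) ^ 2 / 2 - enorm2 t ^ 2) l atTop :=
    tendsto_atTop_add_const_right _ _
      (((tendsto_pow_atTop two_ne_zero).comp hv).atTop_div_const two_pos)
  refine tendsto_atTop_mono (fun i => ?_) (Real.tendsto_sqrt_atTop.comp hlower)
  exact Real.sqrt_le_iff.2 ⟨enorm2_nonneg _, by linarith [enorm2_sq_le_add t (v i)]⟩

variable {R : T → Matrix κ κ ℝ} {R₀ : Matrix κ κ ℝ} {v : T → κ → ℝ}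

lemma exists_enorm2_le_mul_sqrt_dotProduct_mulVec (hR : ∀ᶠ i in l, (R i).PosDef)
    (hR₀ : R₀.PosDef) (hlim : Tendsto R l (𝓝 R₀)) :
    ∃ K > 0, ∀ᶠ i in l, ∀ x, enorm2 x ≤ K * √(x ⬝ᵥ R i *ᵥ x) := by
  classical
  have htrace : Tendsto (fun i => (R i)⁻¹.trace) l (𝓝 R₀⁻¹.trace) :=
    (continuous_id.matrix_trace.tendsto _).comp ((continuousAt_inv_of_posDef hR₀).tendsto.comp hlim)
  set C := |R₀⁻¹.trace| + 1
  refine ⟨√C, by positivity, ?_⟩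
  filter_upwards [hR, htrace.eventually_le_const ((le_abs_self _).trans_lt (lt_add_one _))]
    with i hi hC x
  rw [← Real.sqrt_mul (by positivity)]
  refine Real.le_sqrt_of_sq_le ?_
  calc enorm2 x ^ 2 ≤ (R i)⁻¹.trace * (x ⬝ᵥ R i *ᵥ x) := by
        rw [enorm2_sq, trace, Finset.sum_mul]
        exact Finset.sum_le_sum fun j _ => sq_apply_le_inv_mul_dotProduct_mulVec hi x j
    _ ≤ C * (x ⬝ᵥ R i *ᵥ x) := by
        gcongr
        exact hi.posSemidef.dotProduct_mulVec_nonneg x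

lemma tendsto_sqrt_dotProduct_mulVec_atTop (hR : ∀ᶠ i in l, (R i).PosDef) (hR₀ : R₀.PosDef)
    (hlim : Tendsto R l (𝓝 R₀)) (hv : Tendsto (fun i => enorm2 (v i)) l atTop) :
    Tendsto (fun i => √(v i ⬝ᵥ R i *ᵥ v i)) l atTop := by
  obtain ⟨K, hK, hbound⟩ := exists_enorm2_le_mul_sqrt_dotProduct_mulVec hR hR₀ hlim
  refine tendsto_atTop_mono' _ ?_ (hv.atTop_div_const hK)
  filter_upwards [hbound] with i hi
  exact (div_le_iff₀' hK).2 (hi (v i))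

lemma tendsto_stretch_sub_one_smul (ha : 0 < a) (hb : 0 < b) (hR : ∀ᶠ i in l, (R i).PosDef)
    (hR₀ : R₀.PosDef) (hlim : Tendsto R l (𝓝 R₀))
    (hv : Tendsto (fun i => enorm2 (v i)) l atTop) :
    Tendsto (fun i => (stretch a b √(v i ⬝ᵥ R i *ᵥ v i) - 1) • v i) l (𝓝 0) := by
  obtain ⟨K, -, hbound⟩ := exists_enorm2_le_mul_sqrt_dotProduct_mulVec hR hR₀ hlim
  have hr := tendsto_sqrt_dotProduct_mulVec_atTop hR hR₀ hlim hv
  have hmajorant := ((tendsto_mul_stretch_sub_one ha hb).comp hr).const_mul K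
  rw [mul_zero] at hmajorant
  refine tendsto_pi_nhds.2 fun j => squeeze_zero_norm' ?_ hmajorant
  filter_upwards [hbound] with i hi
  set r := √(v i ⬝ᵥ R i *ᵥ v i)
  have hs : 0 ≤ stretch a b r - 1 := sub_nonneg.2 (one_le_stretch ha r)
  calc ‖((stretch a b r - 1) • v i) j‖ = (stretch a b r - 1) * |v i j| := by
        rw [Pi.smul_apply, smul_eq_mul, Real.norm_eq_abs, abs_mul, abs_of_nonneg hs]
    _ ≤ (stretch a b r - 1) * (K * r) := by
        gcongr
        exact (abs_apply_le_enorm2 _ j).trans (hi (v i))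
    _ = K * (r * (stretch a b r - 1)) := by ring

variable [DecidableEq ι] [DecidableEq κ] {σ2 : ℝ} {Q : T → Matrix (ι ⊕ κ) (ι ⊕ κ) ℝ}
  {Q₀ : Matrix (ι ⊕ κ) (ι ⊕ κ) ℝ} {γ : T → κ → ℝ}

lemma tendsto_quadDens_of_tendsto (hQ₀ : Q₀.PosDef) (hlim : Tendsto Q l (𝓝 Q₀))
    (t : ι ⊕ κ → ℝ) {r : T → ℝ} {x : κ → ℝ} {ρ : ℝ}
    (hr : ∀ i, r i = √((t ∘ Sum.inr + γ i) ⬝ᵥ schur (Q i) *ᵥ (t ∘ Sum.inr + γ i)))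
    (hx : Tendsto (fun i => stretch a b (r i) • (t ∘ Sum.inr + γ i) - γ i) l (𝓝 x))
    (hρ : Tendsto (fun i => radialWeight a b (Fintype.card κ) (gfun a b (r i))) l (𝓝 ρ)) :
    Tendsto (fun i => quadDens a b σ2 (Q i) (γ i) t) l
      (𝓝 ((2 * π * σ2) ^ (-(Fintype.card (ι ⊕ κ) : ℝ) / 2) * √Q₀.det *
        rexp (-((t ∘ Sum.inl + regCoef Q₀ *ᵥ (t ∘ Sum.inr)) ⬝ᵥ
          Q₀.toBlocks₁₁ *ᵥ (t ∘ Sum.inl + regCoef Q₀ *ᵥ (t ∘ Sum.inr))) / (2 * σ2)) * ρ *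
        rexp (-(x ⬝ᵥ schur Q₀ *ᵥ x) / (2 * σ2)))) := by
  have hdet : Tendsto (fun i => √(Q i).det) l (𝓝 √Q₀.det) :=
    ((continuous_id.matrix_det.tendsto Q₀).comp hlim).sqrt
  have h₁₁ : Tendsto (fun i => (Q i).toBlocks₁₁) l (𝓝 Q₀.toBlocks₁₁) :=
    ((continuous_id.matrix_submatrix Sum.inl Sum.inl).tendsto Q₀).comp hlim
  have hy : Tendsto (fun i => t ∘ Sum.inl + regCoef (Q i) *ᵥ (t ∘ Sum.inr)) l
      (𝓝 (t ∘ Sum.inl + regCoef Q₀ *ᵥ (t ∘ Sum.inr))) :=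
    (tendsto_mulVec ((continuousAt_regCoef hQ₀).tendsto.comp hlim) tendsto_const_nhds).const_add _
  have hyy := ((tendsto_dotProduct_mulVec h₁₁ hy).neg.div_const (2 * σ2)).rexp
  have hxx := ((tendsto_dotProduct_mulVec ((continuousAt_schur hQ₀).tendsto.comp hlim)
    hx).neg.div_const (2 * σ2)).rexp
  simp only [quadDens, ← hr]
  exact (((hdet.const_mul _).mul hyy).mul hρ).mul hxx

lemma tendsto_quadDens (ha : 0 < a) (hb : 0 < b) (hQ₀ : Q₀.PosDef) (hlim : Tendsto Q l (𝓝 Q₀))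
    {γ₀ : κ → ℝ} (hγ : Tendsto γ l (𝓝 γ₀)) (t : ι ⊕ κ → ℝ) :
    Tendsto (fun i => quadDens a b σ2 (Q i) (γ i) t) l (𝓝 (quadDens a b σ2 Q₀ γ₀ t)) := by
  have hv := hγ.const_add (t ∘ Sum.inr)
  have hr := (tendsto_dotProduct_mulVec ((continuousAt_schur hQ₀).tendsto.comp hlim) hv).sqrt
  have hx := ((((continuous_stretch ha hb).tendsto _).comp hr).smul hv).sub hγ
  have hρ := (((continuous_radialWeight ha hb (Fintype.card κ)).comp
    (continuous_gfun ha hb)).tendsto _).comp hr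
  exact tendsto_quadDens_of_tendsto hQ₀ hlim t (fun _ => rfl) hx hρ

lemma tendsto_quadDens_gaussCovDens (ha : 0 < a) (hb : 0 < b) (hQ : ∀ᶠ i in l, (Q i).PosDef)
    (hQ₀ : Q₀.PosDef) (hlim : Tendsto Q l (𝓝 Q₀))
    (hγ : Tendsto (fun i => enorm2 (γ i)) l atTop) (t : ι ⊕ κ → ℝ) :
    Tendsto (fun i => quadDens a b σ2 (Q i) (γ i) t) l (𝓝 (gaussCovDens σ2 Q₀ t)) := by
  have hS := (continuousAt_schur hQ₀).tendsto.comp hlim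
  have hS_pos : ∀ᶠ i in l, (schur (Q i)).PosDef := hQ.mono fun _ => posDef_schur
  have hv := tendsto_enorm2_const_add_atTop hγ (t ∘ Sum.inr)
  have hr := tendsto_sqrt_dotProduct_mulVec_atTop hS_pos (posDef_schur hQ₀) hS hv
  have hx := (tendsto_stretch_sub_one_smul ha hb hS_pos (posDef_schur hQ₀) hS hv).const_add
    (t ∘ Sum.inr)
  have hρ := (tendsto_radialWeight_atTop ha hb (Fintype.card κ)).comp
    ((tendsto_gfun_atTop ha hb).comp hr)
  convert tendsto_quadDens_of_tendsto hQ₀ hlim t (fun _ => rfl) (hx.congr fun i => ?_) hρ using 2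
  · rw [add_zero, mul_one, mul_assoc, ← Real.exp_add, gaussCovDens,
      dotProduct_mulVec_eq_add_schur hQ₀]
    ring_nf
  · module

end DensityLimits

/-- if `√n β₂⁽ⁿ⁾ → γ` (resp. `‖√n β₂⁽ⁿ⁾‖ → ∞`), the finite-sample densities
`f_{n,β⁽ⁿ⁾,σ}` of `√n(β̃ − β⁽ⁿ⁾)` converge in `L¹` to `f_{∞,γ}` (resp. to the `N(0, σ²Q⁻¹)`
density); consequently the distributions converge in total variation distance. -/
theorem statement9 {k₁ k₂ : ℕ} (hk₁ : 0 < k₁) (hk₂ : 0 < k₂)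
    (X : ∀ n : ℕ, Matrix (Fin n) (Fin k₁ ⊕ Fin k₂) ℝ)
    (hX : ∀ n, k₁ + k₂ ≤ n → (X n).rank = k₁ + k₂)
    (Q : Matrix (Fin k₁ ⊕ Fin k₂) (Fin k₁ ⊕ Fin k₂) ℝ) (hQ : Q.PosDef)
    (hlim : Tendsto (fun n : ℕ => (n : ℝ)⁻¹ • ((X n)ᵀ * X n)) atTop (𝓝 Q))
    (σ α : ℝ) (hσ : 0 < σ) (hα : 0 < α)
    (β : ∀ _ : ℕ, (Fin k₁ ⊕ Fin k₂) → ℝ) :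
    (∀ γ : Fin k₂ → ℝ, Tendsto (fun n : ℕ => Real.sqrt n • (β n ∘ Sum.inr)) atTop (𝓝 γ) →
      Tendsto (fun n : ℕ =>
          ∫ t, |fdens (X n) (β n) (σ ^ 2) α t - fInfty Q (σ ^ 2) α γ t| ∂volume)
        atTop (𝓝 (0 : ℝ)) ∧
      Tendsto (fun n : ℕ => ⨆ s : Set ((Fin k₁ ⊕ Fin k₂) → ℝ), ⨆ (_ : MeasurableSet s),
          |(((Pmeas (X n) (β n) (σ ^ 2)).map
              (fun Y => Real.sqrt n • (mavg α (σ ^ 2) (X n) Y - β n))) s).toReal -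
            ((limitLaw Q (σ ^ 2) α γ) s).toReal|)
        atTop (𝓝 (0 : ℝ))) ∧
    (Tendsto (fun n : ℕ => enorm2 (Real.sqrt n • (β n ∘ Sum.inr))) atTop atTop →
      Tendsto (fun n : ℕ =>
          ∫ t, |fdens (X n) (β n) (σ ^ 2) α t - gaussCovDens (σ ^ 2) Q t| ∂volume)
        atTop (𝓝 (0 : ℝ)) ∧
      Tendsto (fun n : ℕ => ⨆ s : Set ((Fin k₁ ⊕ Fin k₂) → ℝ), ⨆ (_ : MeasurableSet s),
          |(((Pmeas (X n) (β n) (σ ^ 2)).map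
              (fun Y => Real.sqrt n • (mavg α (σ ^ 2) (X n) Y - β n))) s).toReal -
            ((gaussCov (σ ^ 2) Q) s).toReal|)
        atTop (𝓝 (0 : ℝ))) := by
  have hσ2 : 0 < σ ^ 2 := pow_pos hσ 2
  have ha : 0 < rexp (2 * α * k₂) := exp_pos _
  have hb : 0 < σ ^ 2 / α := div_pos hσ2 hα
  have hlarge : ∀ᶠ n : ℕ in atTop, 0 < n ∧ ((X n)ᵀ * X n).PosDef := by
    filter_upwards [eventually_ge_atTop (k₁ + k₂)] with n hn
    exact ⟨by omega, posDef_gram (hX n hn)⟩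
  have hdens := hlarge.mono fun n hn => isDensityOf_fdens hn.2 hn.1 hσ2 hα (β n)
  have hfdens (t : Fin k₁ ⊕ Fin k₂ → ℝ) :=
    hlarge.mono fun n hn => (fdens_eq_quadDens hn.2 hn.1 hσ2 hα (β n) t).symm
  have hgram : ∀ᶠ n : ℕ in atTop, ((n : ℝ)⁻¹ • ((X n)ᵀ * X n)).PosDef :=
    hlarge.mono fun n hn => hn.2.smul (inv_pos.2 (Nat.cast_pos.2 hn.1))
  refine ⟨fun γ hγ => ?_, fun hγ => ?_⟩
  · have hlaw := isDensityOf_fInfty hQ hσ2 hα γ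
    have hL1 := IsDensityOf.tendsto_integral_abs_sub hdens hlaw <| ae_of_all _ fun t => by
      rw [fInfty_eq_quadDens hQ hσ2 hα]
      exact (tendsto_quadDens ha hb hQ hlim hγ t).congr' (hfdens t)
    exact ⟨hL1, IsDensityOf.tendsto_iSup_abs_toReal_sub hdens hlaw hL1⟩
  · have hlaw := isDensityOf_gaussCovDens hQ hσ2
    have hL1 := IsDensityOf.tendsto_integral_abs_sub hdens hlaw <| ae_of_all _ fun t =>
      (tendsto_quadDens_gaussCovDens ha hb hgram hQ hlim hγ t).congr' (hfdens t)
    exact ⟨hL1, IsDensityOf.tendsto_iSup_abs_toReal_sub hdens hlaw hL1⟩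

end
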